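/- Let n, M ≥ 1 be integers and let θ be an n×n matrix with nonnegative real entries such that ∏_{i} θ(i,σ(i)) > 0 for at least one permutation σ ∈ S_n. Then ⟨perm(θ↑P_M)⟩ ≤ perm(θ)^M ≤ 2^{n(M−1)/2} · ⟨perm(θ↑P_M)⟩; equivalently, the degree-M Bethe permanent perm_{B,M}(θ) = ⟨perm(θ↑P_M)⟩^{1/M} satisfies 1 ≤ perm(θ)/perm_{B,M}(θ) ≤ (2^{n/2})^{(M−1)/M}. -/

import Mathlib

open scoped BigOperators

noncomputable section

/-- The permanent of a real square matrix: `perm(A) = Σ_{σ} ∏_i A(i, σ(i))`. -/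
def perm' {α : Type*} [Fintype α] [DecidableEq α] (A : Matrix α α ℝ) : ℝ :=
  ∑ σ : Equiv.Perm α, ∏ i, A i (σ i)

/-- The `P_M`-lifting `θ↑P_M`: the `nM×nM` matrix with entries
`(θ↑P_M)((i,m),(j,m')) = θ(i,j)·P^{(i,j)}(m,m')`. -/
def liftMat {n M : ℕ} (θ : Matrix (Fin n) (Fin n) ℝ)
    (P : Fin n → Fin n → Equiv.Perm (Fin M)) :
    Matrix (Fin n × Fin M) (Fin n × Fin M) ℝ :=
  Matrix.of fun p q => θ p.1 q.1 * (if P p.1 q.1 p.2 = q.2 then 1 else 0)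

/-- `⟨perm(θ↑P_M)⟩`: the arithmetic average of `perm(θ↑P_M)` over all `(M!)^{n²}`
collections `P_M` of `n²` permutation matrices of size `M×M`. -/
def avgLiftPerm (n M : ℕ) (θ : Matrix (Fin n) (Fin n) ℝ) : ℝ :=
  (∑ P : Fin n → Fin n → Equiv.Perm (Fin M), perm' (liftMat θ P)) /
    (Fintype.card (Fin n → Fin n → Equiv.Perm (Fin M)) : ℝ)

/-- A cubic minorant for the expected logarithmic tail of a probability vector. -/
noncomputable def rowBound (x : ℝ) : ℝ :=
  -(x * (1 - x) * ((4 * Real.log 2 - 2) - (6 * Real.log 2 - 4) * x))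

lemma le_of_hasDerivAt_nonneg {f f' : ℝ → ℝ} {a b : ℝ} (hab : a ≤ b)
    (hf : ∀ x ∈ Set.Icc a b, HasDerivAt f (f' x) x) (h : ∀ x ∈ Set.Icc a b, 0 ≤ f' x) :
    f a ≤ f b := by
  have : MonotoneOn f (Set.Icc a b) := by
    apply monotoneOn_of_deriv_nonneg (convex_Icc a b)
    · exact fun x hx => (hf x hx).continuousAt.continuousWithinAt
    · intro x hx
      rw [interior_Icc] at hx
      exact (hf x (Set.Ioo_subset_Icc_self hx)).differentiableAt.differentiableWithinAt
    · intro x hx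
      rw [interior_Icc] at hx
      rw [(hf x (Set.Ioo_subset_Icc_self hx)).deriv]
      exact h x (Set.Ioo_subset_Icc_self hx)
  exact this ⟨le_rfl, hab⟩ ⟨hab, le_rfl⟩ hab

lemma le_of_hasDerivAt_nonpos {f f' : ℝ → ℝ} {a b : ℝ} (hab : a ≤ b)
    (hf : ∀ x ∈ Set.Icc a b, HasDerivAt f (f' x) x) (h : ∀ x ∈ Set.Icc a b, f' x ≤ 0) :
    f b ≤ f a := by
  have := le_of_hasDerivAt_nonneg (f := fun x => -f x) (f' := fun x => -f' x) hab
    (fun x hx => (hf x hx).neg) (fun x hx => by linarith [h x hx])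
  linarith

lemma log_one_half : Real.log (1 / 2) = -Real.log 2 := by
  rw [one_div, Real.log_inv]

lemma log_one_sub_le {x : ℝ} (h0 : 0 ≤ x) (h1 : x < 1) :
    Real.log (1 - x) ≤ (2 - 4 * Real.log 2) * x - (4 - 4 * Real.log 2) * x ^ 2 := by
  have hL1 := Real.log_two_gt_d9
  have hL2 := Real.log_two_lt_d9
  have hlog : Real.log (1 - 1 / 2) = -Real.log 2 := by rw [← log_one_half]; norm_num
  set L := Real.log 2
  let f : ℝ → ℝ := fun x => (2 - 4 * L) * x - (4 - 4 * L) * x ^ 2 - Real.log (1 - x)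
  let f' : ℝ → ℝ := fun x => (x - 1 / 2) * (2 * (4 - 4 * L) * x - 2 * (3 - 4 * L)) / (1 - x)
  have hf : ∀ x, x < 1 → HasDerivAt f (f' x) x := by
    intro x hx
    have hx' : 1 - x ≠ 0 := by linarith
    have := (((hasDerivAt_id x).const_mul (2 - 4 * L)).sub
      (((hasDerivAt_id x).pow 2).const_mul (4 - 4 * L))).sub
      (((hasDerivAt_id x).const_sub 1).log hx')
    refine this.congr_deriv ?_
    simp only [f', id]
    field_simp
    ring
  suffices 0 ≤ f x by simp only [f] at this; linarith
  have f0 : f 0 = 0 := by simp [f]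
  have fh : f (1 / 2) = 0 := by simp only [f]; rw [hlog]; ring
  rcases le_total (1 / 2) x with hx | hx
  · rw [← fh]
    refine le_of_hasDerivAt_nonneg hx (fun y hy => hf y (by linarith [hy.2])) fun y hy => ?_
    have : y < 1 := by linarith [hy.2]
    have h2 := hy.1
    apply div_nonneg (mul_nonneg (by linarith) (by nlinarith)) (by linarith)
  · rcases le_total (2 * (4 - 4 * L) * x) (2 * (3 - 4 * L)) with h | h
    · rw [← f0]
      refine le_of_hasDerivAt_nonneg h0 (fun y hy => hf y (by linarith [hy.2])) fun y hy => ?_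
      have h2 := hy.2
      apply div_nonneg (mul_nonneg_of_nonpos_of_nonpos (by linarith) (by nlinarith)) (by linarith)
    · rw [← fh]
      refine le_of_hasDerivAt_nonpos hx (fun y hy => hf y (by linarith [hy.2])) fun y hy => ?_
      have h2 := hy.1
      have h3 := hy.2
      apply div_nonpos_of_nonpos_of_nonneg
        (mul_nonpos_of_nonpos_of_nonneg (by linarith) (by nlinarith)) (by linarith)

lemma rowBound_le {x : ℝ} (h0 : 0 ≤ x) (h1 : x ≤ 1) :
    rowBound x ≤ (1 - x) * Real.log (1 - x) + Real.log 2 / 2 * x := by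
  have hL1 := Real.log_two_gt_d9
  have hL2 := Real.log_two_lt_d9
  have hlog := log_one_half
  rcases h1.eq_or_lt with rfl | h1
  · simp [rowBound]; linarith
  unfold rowBound
  set L := Real.log 2
  let f : ℝ → ℝ := fun u => Real.log u + L / 2 * (u⁻¹ - 1) +
    (1 - u) * ((2 - 2 * L) + (6 * L - 4) * u)
  let f' : ℝ → ℝ := fun u =>
    (u - 1 / 2) * (-2 * (6 * L - 4) * u ^ 2 + (2 * L - 2) * u + L) / u ^ 2
  have hf : ∀ x, 0 < x → HasDerivAt f (f' x) x := by
    intro x hx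
    have hx' := hx.ne'
    have := ((Real.hasDerivAt_log hx').add
      (((hasDerivAt_inv hx').sub_const 1).const_mul (L / 2))).add
      (((hasDerivAt_id x).const_sub 1).mul
        (((hasDerivAt_id x).const_mul (6 * L - 4)).const_add (2 - 2 * L)))
    refine this.congr_deriv ?_
    simp only [f', id]
    field_simp
    ring
  have key : ∀ u, 0 < u → u ≤ 1 → 0 ≤ f u := by
    intro u hu hu1
    have f1 : f 1 = 0 := by simp [f]
    have fh : f (1 / 2) = 0 := by simp only [f]; rw [hlog]; norm_num; ring
    rcases le_total u (1 / 2) with hx | hx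
    · rw [← fh]
      refine le_of_hasDerivAt_nonpos hx (fun y hy => hf y (by linarith [hy.1])) fun y hy => ?_
      have h2 := hy.2
      have h3 : 0 < y := by linarith [hy.1]
      apply div_nonpos_of_nonpos_of_nonneg
        (mul_nonpos_of_nonpos_of_nonneg (by linarith) (by nlinarith)) (by positivity)
    · rcases le_total 0 (-2 * (6 * L - 4) * u ^ 2 + (2 * L - 2) * u + L) with h | h
      · rw [← fh]
        refine le_of_hasDerivAt_nonneg hx (fun y hy => hf y (by linarith [hy.1])) fun y hy => ?_
        have h2 := hy.2
        have h3 := hy.1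
        have h4 : y ^ 2 ≤ u ^ 2 := by gcongr
        apply div_nonneg (mul_nonneg (by linarith) (by nlinarith)) (by positivity)
      · rw [← f1]
        refine le_of_hasDerivAt_nonpos hu1 (fun y hy => hf y (by linarith [hy.1])) fun y hy => ?_
        have h2 := hy.1
        have h4 : u ^ 2 ≤ y ^ 2 := by gcongr
        apply div_nonpos_of_nonpos_of_nonneg
          (mul_nonpos_of_nonneg_of_nonpos (by linarith) (by nlinarith)) (by positivity)
  have h := mul_nonneg (by linarith : (0:ℝ) ≤ 1 - x) (key (1 - x) (by linarith) (by linarith))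
  have hx' : 1 - x ≠ 0 := by linarith
  have e : (1 - x) * f (1 - x) = (1 - x) * Real.log (1 - x) + L / 2 * x +
      x * (1 - x) * ((4 * L - 2) - (6 * L - 4) * x) := by
    simp only [f]
    field_simp
    ring
  rw [e] at h
  linarith

lemma pair_rational {x y : ℝ} (hx : 0 ≤ x) (hy : 0 ≤ y) (hx1 : x < 1) (hy1 : y < 1)
    (hxy : x + y ≤ 1) {a b : ℝ} (hb : 0 ≤ b) (hab : 3 * b ≤ a) :
    (a + b) * (y / (1 - x) + x / (1 - y)) -
      b * ((y / (1 - x)) ^ 2 * (2 - x) + (x / (1 - y)) ^ 2 * (2 - y)) ≤ (2 * a - b) * (x + y) := by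
  have h1 : 0 < 1 - x := by linarith
  have h2 : 0 < 1 - y := by linarith
  have hA : y / (1 - x) + x / (1 - y) ≤ 2 * (x + y) := by
    rw [div_add_div _ _ h1.ne' h2.ne', div_le_iff₀ (by positivity)]
    nlinarith [mul_nonneg (by linarith : 0 ≤ 1 - x - y) (by nlinarith : 0 ≤ x + y - 2 * x * y)]
  have hB : 4 * (y / (1 - x) + x / (1 - y)) -
      ((y / (1 - x)) ^ 2 * (2 - x) + (x / (1 - y)) ^ 2 * (2 - y)) ≤ 5 * (x + y) := by
    have hR : 0 ≤ (x + y) * (1 + 2 * (x + y)) - x * y * (12 - (x + y)) := by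
      nlinarith [mul_nonneg (sq_nonneg (x - y)) (by linarith : 0 ≤ 12 - (x + y)),
        mul_nonneg (add_nonneg hx hy) (sq_nonneg (2 - (x + y)))]
    have hN : 0 ≤ (1 - x - y) * (2 * x * y * (x - y) ^ 2 + (1 - x - y) *
        ((x + y) * (1 + 2 * (x + y)) - x * y * (12 - (x + y)))) / ((1 - x) ^ 2 * (1 - y) ^ 2) := by
      have h3 : 0 ≤ 1 - x - y := by linarith
      positivity
    have e : 5 * (x + y) - (4 * (y / (1 - x) + x / (1 - y)) -
        ((y / (1 - x)) ^ 2 * (2 - x) + (x / (1 - y)) ^ 2 * (2 - y))) =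
        (1 - x - y) * (2 * x * y * (x - y) ^ 2 + (1 - x - y) *
        ((x + y) * (1 + 2 * (x + y)) - x * y * (12 - (x + y)))) / ((1 - x) ^ 2 * (1 - y) ^ 2) := by
      field_simp
      ring
    linarith
  nlinarith [mul_le_mul_of_nonneg_left hA (sub_nonneg.2 hab), mul_le_mul_of_nonneg_left hB hb]

/-- The contribution of the ordered pair `(x, y)` to the recursion for `rowBound`. -/
noncomputable def pairGain (x y : ℝ) : ℝ :=
  (1 - x) * rowBound (y / (1 - x)) - rowBound y +
    y / (1 - x) * ((1 - x) * Real.log (1 - x) - rowBound x)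

lemma pairGain_add_le {x y : ℝ} (hx : 0 ≤ x) (hy : 0 ≤ y) (hxy : x + y ≤ 1) :
    pairGain x y + pairGain y x ≤ 0 := by
  have hL1 := Real.log_two_gt_d9
  have hL2 := Real.log_two_lt_d9
  rcases (by linarith : x ≤ 1).eq_or_lt with rfl | hx1
  · obtain rfl : y = 0 := by linarith
    simp [pairGain, rowBound]
  rcases (by linarith : y ≤ 1).eq_or_lt with rfl | hy1
  · obtain rfl : x = 0 := by linarith
    simp [pairGain, rowBound]
  have h1 : 1 - x ≠ 0 := by linarith
  have h2 : 1 - y ≠ 0 := by linarith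
  have e : pairGain x y + pairGain y x =
      x * y * ((10 * Real.log 2 - 6) * (y / (1 - x) + x / (1 - y)) -
        (6 * Real.log 2 - 4) * ((y / (1 - x)) ^ 2 * (2 - x) + (x / (1 - y)) ^ 2 * (2 - y)) +
        2 * (4 * Real.log 2 - 2) - (6 * Real.log 2 - 4) * (x + y)) +
      (y * Real.log (1 - x) + x * Real.log (1 - y)) := by
    unfold pairGain rowBound
    field_simp
    ring
  have hr := pair_rational hx hy hx1 hy1 hxy (a := 4 * Real.log 2 - 2) (b := 6 * Real.log 2 - 4)
    (by linarith) (by linarith)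
  have l1 := mul_le_mul_of_nonneg_left (log_one_sub_le hx hx1) hy
  have l2 := mul_le_mul_of_nonneg_left (log_one_sub_le hy hy1) hx
  have hr' := mul_le_mul_of_nonneg_left hr (mul_nonneg hx hy)
  rw [e]
  linarith

lemma sum_rowBound_remove_le {ι : Type*} [Fintype ι] [DecidableEq ι] {p : ι → ℝ} (hp : ∀ i, 0 ≤ p i)
    (hs : ∑ i, p i = 1) :
    ∑ c, ((1 - p c) * Real.log (1 - p c) +
      (1 - p c) * (∑ k, rowBound (p k / (1 - p c)) - rowBound (p c / (1 - p c)))) ≤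
      Fintype.card ι * ∑ k, rowBound (p k) := by
  have hpair : ∀ c k, c ≠ k → p c + p k ≤ 1 := by
    intro c k hck
    rw [← hs, ← Finset.sum_pair hck]
    exact Finset.sum_le_sum_of_subset_of_nonneg (Finset.subset_univ _) fun i _ _ => hp i
  have hrow : ∀ c, (1 - p c) * Real.log (1 - p c) +
      (1 - p c) * (∑ k, rowBound (p k / (1 - p c)) - rowBound (p c / (1 - p c))) =
      (∑ k ∈ Finset.univ.erase c, pairGain (p c) (p k)) + ∑ k, rowBound (p k) := by
    intro c
    have h1 : ∑ k ∈ Finset.univ.erase c, p k = 1 - p c := by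
      rw [← hs, ← Finset.add_sum_erase _ _ (Finset.mem_univ c)]; ring
    unfold pairGain
    rw [Finset.sum_add_distrib, Finset.sum_sub_distrib, ← Finset.mul_sum, ← Finset.sum_mul,
      ← Finset.sum_div, h1, ← Finset.add_sum_erase _ _ (Finset.mem_univ c),
      ← Finset.add_sum_erase _ (fun k => rowBound (p k)) (Finset.mem_univ c)]
    by_cases hc : 1 - p c = 0
    · have : p c = 1 := by linarith
      simp [this, rowBound]
    · rw [div_self hc]
      ring
  have hsym : ∑ c, ∑ k ∈ Finset.univ.erase c, pairGain (p c) (p k) ≤ 0 := by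
    have e : ∑ c, ∑ k ∈ Finset.univ.erase c, pairGain (p c) (p k) =
        ∑ c, ∑ k ∈ Finset.univ.erase c, pairGain (p k) (p c) := by
      apply Finset.sum_comm'
      simp [eq_comm]
    have h2 : ∑ c, ∑ k ∈ Finset.univ.erase c, pairGain (p c) (p k) +
        ∑ c, ∑ k ∈ Finset.univ.erase c, pairGain (p k) (p c) ≤ 0 := by
      rw [← Finset.sum_add_distrib]
      refine Finset.sum_nonpos fun c _ => ?_
      rw [← Finset.sum_add_distrib]
      refine Finset.sum_nonpos fun k hk => ?_
      exact pairGain_add_le (hp c) (hp k) (hpair c k (Finset.ne_of_mem_erase hk).symm)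
    linarith
  rw [Finset.sum_congr rfl fun c _ => hrow c, Finset.sum_add_distrib]
  simp only [Finset.sum_const, Finset.card_univ, nsmul_eq_mul]
  linarith

/-- Sum over all orderings `τ` of `∑ i, q (τ i) * log (q (τ i) + q (τ (i + 1)) + ⋯)`. -/
noncomputable def logTailSum {n : ℕ} (q : Fin n → ℝ) : ℝ :=
  ∑ τ : Equiv.Perm (Fin n), ∑ i, q (τ i) * Real.log (∑ k ∈ Finset.Ici i, q (τ k))

lemma Fin.Ici_zero_eq_univ (n : ℕ) : (Finset.Ici (0 : Fin (n + 1))) = Finset.univ := by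
  ext; simp

lemma Fin.sum_swap_succ {n : ℕ} (f : Fin (n + 1) → ℝ) (c : Fin (n + 1)) :
    ∑ j : Fin n, f (Equiv.swap 0 c j.succ) = ∑ k, f k - f c := by
  have := Equiv.sum_comp (Equiv.swap 0 c) f
  rw [Fin.sum_univ_succ, Equiv.swap_apply_left] at this
  linarith

lemma Fin.sum_perm_succ {n : ℕ} (F : Equiv.Perm (Fin (n + 1)) → ℝ) :
    ∑ τ, F τ = ∑ c, ∑ e : Equiv.Perm (Fin n), F (Equiv.Perm.decomposeFin.symm (c, e)) := by
  rw [← Equiv.sum_comp Equiv.Perm.decomposeFin.symm F, Fintype.sum_prod_type]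

lemma logTailSum_succ {n : ℕ} (q : Fin (n + 1) → ℝ) :
    logTailSum q = ∑ c, (n.factorial * (q c * Real.log (∑ k, q k)) +
      logTailSum fun j : Fin n => q (Equiv.swap 0 c j.succ)) := by
  unfold logTailSum
  rw [Fin.sum_perm_succ]
  refine Finset.sum_congr rfl fun c _ => ?_
  simp only [Fin.sum_univ_succ (n := n), Fin.sum_Ici_succ, Fin.Ici_zero_eq_univ,
    Equiv.Perm.decomposeFin_symm_apply_zero, Equiv.Perm.decomposeFin_symm_apply_succ]
  rw [Finset.sum_add_distrib]
  congr 1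
  have : ∀ e : Equiv.Perm (Fin n),
      q c + ∑ i : Fin n, q (Equiv.swap 0 c (e i).succ) = q 0 + ∑ i : Fin n, q i.succ := by
    intro e
    rw [Equiv.sum_comp e (fun j => q (Equiv.swap 0 c j.succ)), Fin.sum_swap_succ,
      ← Fin.sum_univ_succ]
    ring
  simp only [this, Finset.sum_const, Finset.card_univ, Fintype.card_perm, Fintype.card_fin,
    nsmul_eq_mul]

lemma logTailSum_le {n : ℕ} (q : Fin n → ℝ) (hq : ∀ i, 0 ≤ q i) :
    logTailSum q ≤ n.factorial * ((∑ k, q k) * Real.log (∑ k, q k) +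
      (∑ k, q k) * ∑ j, rowBound (q j / ∑ k, q k)) := by
  induction n with
  | zero => simp [logTailSum]
  | succ n ih =>
    rcases (Finset.sum_nonneg fun i (_ : i ∈ Finset.univ) => hq i).eq_or_lt with h0 | hS
    · have hz : ∀ i, q i = 0 := fun i =>
        (Finset.sum_eq_zero_iff_of_nonneg fun i _ => hq i).1 h0.symm i (Finset.mem_univ i)
      simp [logTailSum, hz]
    rw [logTailSum_succ]
    set S := ∑ k, q k
    have hp : ∀ i, 0 ≤ q i / S := fun i => div_nonneg (hq i) hS.le
    have hp1 : ∑ i, q i / S = 1 := by rw [← Finset.sum_div]; exact div_self hS.ne'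
    have hremove := sum_rowBound_remove_le hp hp1
    have hc : ∀ c, n.factorial * (q c * Real.log S) +
        logTailSum (fun j : Fin n => q (Equiv.swap 0 c j.succ)) ≤
        n.factorial * S * (Real.log S + ((1 - q c / S) * Real.log (1 - q c / S) +
        (1 - q c / S) * (∑ k, rowBound (q k / S / (1 - q c / S)) -
          rowBound (q c / S / (1 - q c / S))))) := by
      intro c
      have h1 := ih (fun j : Fin n => q (Equiv.swap 0 c j.succ)) fun j => hq _
      have h2 : ∑ j : Fin n, q (Equiv.swap 0 c j.succ) = S * (1 - q c / S) := by
        rw [Fin.sum_swap_succ]; field_simp; rfl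
      have h3 := Fin.sum_swap_succ (fun j => rowBound (q j / (S * (1 - q c / S)))) c
      rw [h2, h3] at h1
      have h4 : S * (1 - q c / S) * Real.log (S * (1 - q c / S)) =
          S * (1 - q c / S) * (Real.log S + Real.log (1 - q c / S)) := by
        by_cases hz : 1 - q c / S = 0
        · simp [hz]
        · rw [Real.log_mul hS.ne' hz]
      rw [h4] at h1
      simp only [div_div]
      refine (add_le_add_right h1 _).trans (le_of_eq ?_)
      have : q c = S * (q c / S) := by field_simp
      generalize hr : q c / S = r at *
      rw [this]
      ring
    refine (Finset.sum_le_sum fun c _ => hc c).trans ?_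
    rw [← Finset.mul_sum, Finset.sum_add_distrib]
    simp only [Finset.sum_const, Finset.card_univ, Fintype.card_fin, nsmul_eq_mul] at hremove ⊢
    rw [Nat.factorial_succ]
    have := mul_le_mul_of_nonneg_left hremove (by positivity : 0 ≤ n.factorial * S)
    push_cast at this ⊢
    linarith

/-- The expected logarithmic tail of a probability vector in a uniformly random order. -/
lemma logTailSum_le_of_sum_eq_one {n : ℕ} {q : Fin n → ℝ} (hq : ∀ i, 0 ≤ q i)
    (hs : ∑ i, q i = 1) :
    logTailSum q ≤ n.factorial * (∑ j, (1 - q j) * Real.log (1 - q j) + Real.log 2 / 2) := by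
  refine (logTailSum_le q hq).trans ?_
  rw [hs]
  simp only [Real.log_one, mul_zero, zero_add, one_mul, div_one]
  gcongr
  have hle : ∀ j, q j ≤ 1 := fun j => by
    rw [← hs]; exact Finset.single_le_sum (fun i _ => hq i) (Finset.mem_univ j)
  refine (Finset.sum_le_sum fun j _ => rowBound_le (hq j) (hle j)).trans ?_
  rw [Finset.sum_add_distrib, ← Finset.mul_sum, hs, mul_one]

/-- Sampling a permutation row by row, proportionally to `W` on the remaining columns, gives a
subprobability. -/
lemma sum_prod_div_tail_le_one {n : ℕ} (W : Fin n → Fin n → ℝ) (hW : ∀ i j, 0 ≤ W i j) :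
    ∑ σ : Equiv.Perm (Fin n), ∏ i, W i (σ i) / ∑ k ∈ Finset.Ici i, W i (σ k) ≤ 1 := by
  induction n with
  | zero => simp
  | succ n ih =>
    rw [Fin.sum_perm_succ]
    have h : ∀ c : Fin (n + 1), ∑ e : Equiv.Perm (Fin n),
        ∏ i, W i (Equiv.Perm.decomposeFin.symm (c, e) i) /
          ∑ k ∈ Finset.Ici i, W i (Equiv.Perm.decomposeFin.symm (c, e) k) ≤
        W 0 c / ∑ k, W 0 k := by
      intro c
      have h1 : ∀ e : Equiv.Perm (Fin n),
          ∑ k, W 0 (Equiv.Perm.decomposeFin.symm (c, e) k) = ∑ k, W 0 k :=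
        fun e => Equiv.sum_comp _ (W 0)
      simp only [Fin.prod_univ_succ, Fin.sum_Ici_succ, Fin.Ici_zero_eq_univ, h1,
        Equiv.Perm.decomposeFin_symm_apply_zero, Equiv.Perm.decomposeFin_symm_apply_succ]
      rw [← Finset.mul_sum]
      exact mul_le_of_le_one_right (div_nonneg (hW _ _) (Finset.sum_nonneg fun _ _ => hW _ _))
        (ih (fun i j => W i.succ (Equiv.swap 0 c j.succ)) fun _ _ => hW _ _)
    refine (Finset.sum_le_sum fun c _ => h c).trans ?_
    rw [← Finset.sum_div]
    exact div_self_le_one _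

lemma sum_prod_div_tail_perm_le_one {n : ℕ} (W : Fin n → Fin n → ℝ) (hW : ∀ i j, 0 ≤ W i j)
    (τ : Equiv.Perm (Fin n)) :
    ∑ σ : Equiv.Perm (Fin n),
      ∏ i, W (τ i) (σ (τ i)) / ∑ k ∈ Finset.Ici i, W (τ i) (σ (τ k)) ≤ 1 := by
  refine le_of_eq_of_le ?_ (sum_prod_div_tail_le_one (fun i => W (τ i)) fun _ => hW _)
  exact (Equiv.sum_comp (Equiv.mulRight τ) fun σ : Equiv.Perm (Fin n) =>
    ∏ i, W (τ i) (σ i) / ∑ k ∈ Finset.Ici i, W (τ i) (σ k))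

/-- Gibbs' inequality for an unnormalised weight `x` and a subprobability `ν`. -/
lemma mul_log_sum_le {ι : Type*} [Fintype ι] {x ν : ι → ℝ} (hx : ∀ i, 0 ≤ x i)
    (hν : ∀ i, 0 ≤ ν i) (hν1 : ∑ i, ν i ≤ 1) (hpos : ∀ i, 0 < x i → 0 < ν i) :
    (∑ i, x i) * Real.log (∑ i, x i) ≤ ∑ i, x i * (Real.log (x i) - Real.log (ν i)) := by
  set N := ∑ i, x i
  rcases (Finset.sum_nonneg fun i (_ : i ∈ Finset.univ) => hx i).eq_or_lt with h0 | hN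
  · have hz : ∀ i, x i = 0 := fun i =>
      (Finset.sum_eq_zero_iff_of_nonneg fun i _ => hx i).1 h0.symm i (Finset.mem_univ i)
    simp [N, hz]
  change 0 < N at hN
  have h : ∀ i, x i * Real.log N - x i * (Real.log (x i) - Real.log (ν i)) ≤ N * ν i - x i := by
    intro i
    rcases (hx i).eq_or_lt with h | h
    · rw [← h]; simpa using mul_nonneg hN.le (hν i)
    have hi := hpos i h
    have h2 := Real.log_le_sub_one_of_pos (show 0 < N * ν i / x i by positivity)
    rw [Real.log_div (by positivity) h.ne', Real.log_mul hN.ne' hi.ne'] at h2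
    have h3 := mul_le_mul_of_nonneg_left h2 h.le
    have h4 : x i * (N * ν i / x i - 1) = N * ν i - x i := by field_simp
    linarith
  have hsum := Finset.sum_le_sum fun i (_ : i ∈ Finset.univ) => h i
  rw [Finset.sum_sub_distrib, Finset.sum_sub_distrib, ← Finset.sum_mul, ← Finset.mul_sum] at hsum
  have : N * ∑ i, ν i ≤ N * 1 := by gcongr
  change N * _ - _ ≤ _ - N at hsum
  linarith

lemma sum_mul_sum_perm_apply {n : ℕ} {x : Equiv.Perm (Fin n) → ℝ} {N : ℝ} {γ : Fin n → Fin n → ℝ}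
    (hmarg : ∀ i j, ∑ σ : Equiv.Perm (Fin n), (if σ i = j then x σ else 0) = N * γ i j)
    (h : Fin n → Fin n → ℝ) :
    ∑ σ, x σ * ∑ i, h i (σ i) = N * ∑ i, ∑ j, γ i j * h i j := by
  simp only [Finset.mul_sum]
  simp only [← mul_assoc, ← hmarg, Finset.sum_mul]
  rw [Finset.sum_comm]
  refine Finset.sum_congr rfl fun i _ => ?_
  rw [Finset.sum_comm]
  refine Finset.sum_congr rfl fun σ _ => ?_
  simp

/-- The entropy of a measure `x` on permutations is at most the Bethe entropy of its marginals
`γ`, up to `log √2` for each row. -/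
lemma mul_log_sum_perm_le {n : ℕ} {x : Equiv.Perm (Fin n) → ℝ} {N : ℝ} {γ : Fin n → Fin n → ℝ}
    (hx : ∀ σ, 0 ≤ x σ) (hN : 0 < N) (hxN : ∑ σ, x σ = N) (hγ : ∀ i j, 0 ≤ γ i j)
    (hmarg : ∀ i j, ∑ σ : Equiv.Perm (Fin n), (if σ i = j then x σ else 0) = N * γ i j) :
    N * Real.log N ≤ ∑ σ, x σ * Real.log (x σ) +
      N * (∑ i, ∑ j, ((1 - γ i j) * Real.log (1 - γ i j) - γ i j * Real.log (γ i j)) +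
        n * (Real.log 2 / 2)) := by
  have hsum : ∀ i, ∑ j, γ i j = 1 := by
    intro i
    have : N * ∑ j, γ i j = N := by
      simp only [Finset.mul_sum, ← hmarg]
      rw [Finset.sum_comm]
      simp [hxN]
    exact mul_left_cancel₀ hN.ne' (by rw [this, mul_one])
  have hpos : ∀ σ, 0 < x σ → ∀ i, 0 < γ i (σ i) := by
    intro σ hσ i
    have h1 : x σ ≤ N * γ i (σ i) := by
      rw [← hmarg]
      refine le_of_eq_of_le ?_ (Finset.single_le_sum (f := fun σ' : Equiv.Perm (Fin n) =>
        if σ' i = σ i then x σ' else 0) (fun σ' _ => ?_) (Finset.mem_univ σ))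
      · simp
      · split_ifs <;> simp [hx]
    exact pos_of_mul_pos_right (hσ.trans_le h1) hN.le
  let T : Equiv.Perm (Fin n) → Equiv.Perm (Fin n) → Fin n → ℝ := fun τ σ i =>
    ∑ k ∈ Finset.Ici i, γ (τ i) (σ (τ k))
  have hT : ∀ σ, 0 < x σ → ∀ τ i, 0 < T τ σ i := fun σ hσ τ i =>
    Finset.sum_pos' (fun _ _ => hγ _ _) ⟨i, Finset.mem_Ici.2 le_rfl, hpos σ hσ (τ i)⟩
  have hτ : ∀ τ : Equiv.Perm (Fin n), N * Real.log N ≤ ∑ σ, (x σ * Real.log (x σ) -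
      x σ * ∑ i, Real.log (γ i (σ i)) + x σ * ∑ i, Real.log (T τ σ i)) := by
    intro τ
    have := mul_log_sum_le hx
      (ν := fun σ => ∏ i, γ (τ i) (σ (τ i)) / T τ σ i)
      (fun σ => Finset.prod_nonneg fun i _ =>
        div_nonneg (hγ _ _) (Finset.sum_nonneg fun _ _ => hγ _ _))
      (sum_prod_div_tail_perm_le_one γ hγ τ)
      (fun σ hσ => Finset.prod_pos fun i _ => div_pos (hpos σ hσ _) (hT σ hσ τ i))
    rw [hxN] at this
    refine this.trans (le_of_eq (Finset.sum_congr rfl fun σ _ => ?_))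
    rcases (hx σ).eq_or_lt with h | h
    · simp [← h]
    rw [Real.log_prod fun i _ => (div_pos (hpos σ h _) (hT σ h τ i)).ne']
    simp only [Real.log_div (hpos σ h _).ne' (hT σ h τ _).ne', Finset.sum_sub_distrib]
    rw [Equiv.sum_comp τ fun i => Real.log (γ i (σ i))]
    ring
  have htail : ∑ τ : Equiv.Perm (Fin n), ∑ σ, x σ * ∑ i, Real.log (T τ σ i) =
      N * ∑ r, logTailSum (γ r) := by
    have e1 : ∀ r, N * logTailSum (γ r) = ∑ σ, x σ * ∑ τ : Equiv.Perm (Fin n), ∑ i,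
        if r = τ i then Real.log (T τ σ i) else 0 := by
      intro r
      have : N * logTailSum (γ r) = ∑ σ : Equiv.Perm (Fin n), x σ * ∑ ρ : Equiv.Perm (Fin n), ∑ i,
          if σ r = ρ i then Real.log (∑ k ∈ Finset.Ici i, γ r (ρ k)) else 0 := by
        unfold logTailSum
        simp only [Finset.mul_sum]
        conv_rhs => rw [Finset.sum_comm]
        refine Finset.sum_congr rfl fun ρ _ => ?_
        conv_rhs => rw [Finset.sum_comm]
        refine Finset.sum_congr rfl fun i _ => ?_
        rw [← mul_assoc, ← hmarg, Finset.sum_mul]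
        refine Finset.sum_congr rfl fun σ _ => ?_
        split_ifs <;> simp
      rw [this]
      refine Finset.sum_congr rfl fun σ _ => ?_
      congr 1
      rw [← Equiv.sum_comp (Equiv.mulLeft σ)]
      refine Finset.sum_congr rfl fun τ _ => Finset.sum_congr rfl fun i _ => ?_
      simp only [Equiv.coe_mulLeft, Equiv.Perm.coe_mul, Function.comp_apply,
        EmbeddingLike.apply_eq_iff_eq]
      split_ifs with h
      · rw [h]
      · rfl
    rw [Finset.mul_sum, Finset.sum_congr rfl fun r _ => e1 r]
    conv_lhs => rw [Finset.sum_comm]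
    conv_rhs => rw [Finset.sum_comm]
    refine Finset.sum_congr rfl fun σ _ => ?_
    simp only [← Finset.mul_sum]
    congr 1
    conv_rhs => rw [Finset.sum_comm]
    refine Finset.sum_congr rfl fun τ _ => ?_
    conv_rhs => rw [Finset.sum_comm]
    simp
  have hlogγ : ∑ σ, x σ * ∑ i, Real.log (γ i (σ i)) =
      N * ∑ i, ∑ j, γ i j * Real.log (γ i j) :=
    sum_mul_sum_perm_apply hmarg fun i j => Real.log (γ i j)
  have hrows : ∑ r, logTailSum (γ r) ≤ n.factorial *
      (∑ i, ∑ j, (1 - γ i j) * Real.log (1 - γ i j) + n * (Real.log 2 / 2)) := by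
    refine (Finset.sum_le_sum fun r _ => logTailSum_le_of_sum_eq_one (hγ r) (hsum r)).trans
      (le_of_eq ?_)
    rw [← Finset.mul_sum, Finset.sum_add_distrib]
    simp
  have havg := Finset.sum_le_sum fun τ (_ : τ ∈ Finset.univ) => hτ τ
  simp only [Finset.sum_add_distrib, Finset.sum_sub_distrib, htail, hlogγ, Finset.sum_const,
    Finset.card_univ, Fintype.card_perm, Fintype.card_fin, nsmul_eq_mul] at havg
  have hf : (0 : ℝ) < n.factorial := by positivity
  have h2 := mul_le_mul_of_nonneg_left hrows hN.le
  have h3 : n.factorial * (N * Real.log N) ≤ n.factorial * (∑ σ, x σ * Real.log (x σ) +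
      N * (∑ i, ∑ j, ((1 - γ i j) * Real.log (1 - γ i j) - γ i j * Real.log (γ i j)) +
        n * (Real.log 2 / 2))) := by
    simp only [Finset.sum_sub_distrib]
    linarith
  exact le_of_mul_le_mul_left h3 hf

section MatchSum

variable {α β : Type*} [DecidableEq α] [DecidableEq β]

/-- The sum over the matchings in `E` of the vertices `S` of the product of the edge weights `A` of
the matching and of the vertex weights `w` of the unmatched vertices. -/
def matchSum (A : α → β → ℝ) (w : α ⊕ β → ℝ) : List (α × β) → Finset (α ⊕ β) → ℝ
  | [], S => ∏ v ∈ S, w v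
  | e :: E, S => matchSum A w E S + if Sum.inl e.1 ∈ S ∧ Sum.inr e.2 ∈ S then
      A e.1 e.2 * matchSum A w E ((S.erase (Sum.inl e.1)).erase (Sum.inr e.2)) else 0

/-- The total weight of the edges in `E` joining `u` and `x`. -/
noncomputable def edgeWeight (A : α → β → ℝ) : List (α × β) → α ⊕ β → α ⊕ β → ℝ
  | [], _, _ => 0
  | e :: E, u, x => edgeWeight A E u x +
      if (u = Sum.inl e.1 ∧ x = Sum.inr e.2) ∨ (u = Sum.inr e.2 ∧ x = Sum.inl e.1)
        then A e.1 e.2 else 0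

lemma edgeWeight_nonneg {A : α → β → ℝ} (hA : ∀ i j, 0 ≤ A i j) (E : List (α × β))
    (u x : α ⊕ β) : 0 ≤ edgeWeight A E u x := by
  induction E with
  | nil => exact le_rfl
  | cons e E ih =>
    rw [edgeWeight]
    split_ifs
    · exact add_nonneg ih (hA _ _)
    · simpa using ih

lemma edgeWeight_eq_zero (A : α → β → ℝ) (E : List (α × β)) {u x : α ⊕ β}
    (h : u.isLeft = x.isLeft) : edgeWeight A E u x = 0 := by
  induction E with
  | nil => rfl
  | cons e E ih =>
    rw [edgeWeight, ih, if_neg, add_zero]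
    rintro (⟨rfl, rfl⟩ | ⟨rfl, rfl⟩) <;> simp at h

lemma edgeWeight_inl_inr (A : α → β → ℝ) (E : List (α × β)) (hE : E.Nodup) (i : α) (j : β) :
    edgeWeight A E (Sum.inl i) (Sum.inr j) = if (i, j) ∈ E then A i j else 0 := by
  induction E with
  | nil => rfl
  | cons e E ih =>
    obtain ⟨h1, h2⟩ := List.nodup_cons.1 hE
    rw [edgeWeight, ih h2]
    by_cases h : (i, j) = e
    · subst h
      simp [h1]
    · have : ¬ (i = e.1 ∧ j = e.2) := fun h' => h (Prod.ext h'.1 h'.2)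
      simp [h, this]

lemma matchSum_nonneg {A : α → β → ℝ} (hA : ∀ i j, 0 ≤ A i j) {w : α ⊕ β → ℝ}
    (hw : ∀ v, 0 ≤ w v) (E : List (α × β)) (S : Finset (α ⊕ β)) : 0 ≤ matchSum A w E S := by
  induction E generalizing S with
  | nil => exact Finset.prod_nonneg fun _ _ => hw _
  | cons e E ih =>
    rw [matchSum]
    split_ifs
    · exact add_nonneg (ih _) (mul_nonneg (hA _ _) (ih _))
    · simpa using ih S

lemma matchSum_congr (A : α → β → ℝ) {w w' : α ⊕ β → ℝ} (E : List (α × β)) {S : Finset (α ⊕ β)}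
    (h : ∀ v ∈ S, w v = w' v) : matchSum A w E S = matchSum A w' E S := by
  induction E generalizing S with
  | nil => exact Finset.prod_congr rfl h
  | cons e E ih =>
    rw [matchSum, matchSum, ih h, ih fun v hv => h v (by simp at hv; tauto)]

lemma matchSum_insert (A : α → β → ℝ) (w : α ⊕ β → ℝ) (E : List (α × β)) {S : Finset (α ⊕ β)}
    {u : α ⊕ β} (hu : u ∉ S) :
    matchSum A w E (insert u S) = w u * matchSum A w E S +
      ∑ x ∈ S, edgeWeight A E u x * matchSum A w E (S.erase x) := by
  induction E generalizing S with
  | nil => simp [matchSum, edgeWeight, Finset.prod_insert hu]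
  | cons e E ih =>
    obtain ⟨i, j⟩ := e
    simp only [matchSum, edgeWeight]
    rw [ih hu]
    by_cases hi : u = Sum.inl i
    · subst hi
      have h1 : ∀ x, Sum.inl i ∉ S.erase x := fun x h => hu (Finset.mem_of_mem_erase h)
      simp only [hu, h1, false_and, if_false, add_zero, Finset.mem_insert_self, true_and,
        Finset.mem_insert, reduceCtorEq, false_or, Finset.erase_insert hu, add_mul,
        Finset.sum_add_distrib, or_false, ite_mul, zero_mul, Finset.sum_ite_eq']
      ring
    by_cases hj : u = Sum.inr j
    · subst hj
      have h1 : ∀ x, Sum.inr j ∉ S.erase x := fun x h => hu (Finset.mem_of_mem_erase h)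
      have h2 : ((insert (Sum.inr j) S).erase (Sum.inl i)).erase (Sum.inr j) =
          S.erase (Sum.inl i) := by
        rw [Finset.erase_right_comm, Finset.erase_insert hu]
      simp only [hu, h1, and_false, if_false, add_zero, Finset.mem_insert_self, and_true,
        Finset.mem_insert, reduceCtorEq, false_or, h2, add_mul, true_and, false_and,
        Finset.sum_add_distrib, ite_mul, zero_mul, Finset.sum_ite_eq']
      ring
    have h3 : ((insert u S).erase (Sum.inl i)).erase (Sum.inr j) =
        insert u ((S.erase (Sum.inl i)).erase (Sum.inr j)) := by
      rw [Finset.erase_insert_of_ne hi, Finset.erase_insert_of_ne hj]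
    have h4 : u ∉ (S.erase (Sum.inl i)).erase (Sum.inr j) := by simp [hu]
    simp only [hi, hj, false_and, or_self, if_false, add_zero, Finset.mem_insert,
      Ne.symm hi, Ne.symm hj, false_or, h3]
    rw [ih h4]
    by_cases hS : Sum.inl i ∈ S ∧ Sum.inr j ∈ S
    · have h5 : ∑ x ∈ S, edgeWeight A E u x * (if Sum.inl i ∈ S.erase x ∧ Sum.inr j ∈ S.erase x then
          A i j * matchSum A w E (((S.erase x).erase (Sum.inl i)).erase (Sum.inr j)) else 0) =
          A i j * ∑ x ∈ (S.erase (Sum.inl i)).erase (Sum.inr j), edgeWeight A E u x *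
            matchSum A w E (((S.erase (Sum.inl i)).erase (Sum.inr j)).erase x) := by
        rw [Finset.mul_sum]
        symm
        refine Finset.sum_subset_zero_on_sdiff
          ((Finset.erase_subset _ _).trans (Finset.erase_subset _ _)) ?_ ?_
        · intro x hx
          rw [if_neg, mul_zero]
          simp at hx ⊢
          tauto
        · intro x hx
          simp only [Finset.mem_erase] at hx
          rw [if_pos (by simp [hS, Ne.symm hx.1, Ne.symm hx.2.1]),
            Finset.erase_right_comm (a := Sum.inr j), Finset.erase_right_comm (a := Sum.inl i)]
          ring
      simp only [hS, and_self, if_true, mul_add, Finset.sum_add_distrib]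
      simp only [Finset.mem_erase] at h5
      simp only [Finset.mem_erase]
      simp only [hS, and_true] at h5 ⊢
      rw [h5]
      ring
    · have h6 : ∀ x, ¬ (Sum.inl i ∈ S.erase x ∧ Sum.inr j ∈ S.erase x) := fun x h =>
        hS ⟨Finset.mem_of_mem_erase h.1, Finset.mem_of_mem_erase h.2⟩
      simp only [hS, h6, if_false, add_zero]

/-- Deleting a vertex is negatively correlated with deleting one on the other side, and positively
correlated with deleting one on the same side. -/
lemma matchSum_correlation {A : α → β → ℝ} (hA : ∀ i j, 0 ≤ A i j) (w : α ⊕ β → ℝ)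
    (E : List (α × β)) (S : Finset (α ⊕ β)) {u v : α ⊕ β} (huv : u ≠ v)
    (hu : u ∉ S) (hv : v ∉ S) :
    (u.isLeft ≠ v.isLeft → matchSum A w E (insert u S) * matchSum A w E (insert v S) ≤
      matchSum A w E (insert u (insert v S)) * matchSum A w E S) ∧
    (u.isLeft = v.isLeft → matchSum A w E (insert u (insert v S)) * matchSum A w E S ≤
      matchSum A w E (insert u S) * matchSum A w E (insert v S)) := by
  induction S using Finset.strongInduction generalizing u v with
  | H S ih =>
  have key : matchSum A w E (insert u (insert v S)) * matchSum A w E S -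
      matchSum A w E (insert u S) * matchSum A w E (insert v S) =
      edgeWeight A E u v * matchSum A w E S ^ 2 + ∑ x ∈ S, edgeWeight A E u x *
        (matchSum A w E (insert v (S.erase x)) * matchSum A w E (insert x (S.erase x)) -
          matchSum A w E (insert v (insert x (S.erase x))) * matchSum A w E (S.erase x)) := by
    have hu' : u ∉ insert v S := by simp [hu, huv]
    rw [matchSum_insert A w E hu', matchSum_insert A w E hu, Finset.sum_insert hv,
      Finset.erase_insert hv]
    have h1 : ∀ x ∈ S, edgeWeight A E u x *
        (matchSum A w E (insert v (S.erase x)) * matchSum A w E (insert x (S.erase x)) -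
          matchSum A w E (insert v (insert x (S.erase x))) * matchSum A w E (S.erase x)) =
        edgeWeight A E u x * matchSum A w E ((insert v S).erase x) * matchSum A w E S -
        edgeWeight A E u x * matchSum A w E (S.erase x) * matchSum A w E (insert v S) := by
      intro x hx
      have : v ≠ x := by rintro rfl; exact hv hx
      rw [Finset.erase_insert_of_ne this, Finset.insert_erase hx]
      ring
    rw [Finset.sum_congr rfl h1, Finset.sum_sub_distrib, ← Finset.sum_mul, ← Finset.sum_mul]
    ring
  have hx : ∀ x ∈ S, S.erase x ⊂ S ∧ v ≠ x ∧ v ∉ S.erase x ∧ x ∉ S.erase x := fun x hx =>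
    ⟨Finset.erase_ssubset hx, by rintro rfl; exact hv hx, fun h => hv (Finset.mem_of_mem_erase h),
      Finset.notMem_erase x S⟩
  constructor
  · intro hne
    rw [← sub_nonneg, key]
    refine add_nonneg (mul_nonneg (edgeWeight_nonneg hA E u v) (sq_nonneg _))
      (Finset.sum_nonneg fun x hxS => ?_)
    obtain ⟨h1, h2, h3, h4⟩ := hx x hxS
    by_cases hux : u.isLeft = x.isLeft
    · rw [edgeWeight_eq_zero A E hux, zero_mul]
    · refine mul_nonneg (edgeWeight_nonneg hA E u x) (sub_nonneg.2 ?_)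
      refine (ih _ h1 h2 h3 h4).2 ?_
      revert hne hux
      cases u.isLeft <;> cases v.isLeft <;> cases x.isLeft <;> simp
  · intro heq
    rw [← sub_nonpos, key, edgeWeight_eq_zero A E heq, zero_mul, zero_add]
    refine Finset.sum_nonpos fun x hxS => ?_
    obtain ⟨h1, h2, h3, h4⟩ := hx x hxS
    by_cases hux : u.isLeft = x.isLeft
    · rw [edgeWeight_eq_zero A E hux, zero_mul]
    · refine mul_nonpos_of_nonneg_of_nonpos (edgeWeight_nonneg hA E u x) (sub_nonpos.2 ?_)
      exact (ih _ h1 h2 h3 h4).1 (heq ▸ hux)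

lemma matchSum_add_single (A : α → β → ℝ) (w : α ⊕ β → ℝ) (E : List (α × β))
    {S : Finset (α ⊕ β)} {u : α ⊕ β} (hu : u ∉ S) (y : ℝ) :
    matchSum A (w + Pi.single u y) E (insert u S) =
      matchSum A w E (insert u S) + y * matchSum A w E S := by
  have h : ∀ T ⊆ S, matchSum A (w + Pi.single u y) E T = matchSum A w E T := fun T hT =>
    matchSum_congr A E fun v hv => by
      have : v ≠ u := by rintro rfl; exact hu (hT hv)
      simp [this]
  rw [matchSum_insert A _ E hu, matchSum_insert A _ E hu, h S subset_rfl,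
    Finset.sum_congr rfl fun x _ => by rw [h _ (Finset.erase_subset x S)]]
  simp
  ring

lemma matchSum_zero_eq_sum_perm (A : α → β → ℝ) (E : List (α × β)) (hE : E.Nodup)
    (hE' : ∀ e, e ∈ E) {m : ℕ} (f : Fin m ↪ α) (g : Fin m ↪ β) :
    matchSum A 0 E ((Finset.univ.map (f.trans Function.Embedding.inl)) ∪
      (Finset.univ.map (g.trans Function.Embedding.inr))) =
      ∑ σ : Equiv.Perm (Fin m), ∏ i, A (f i) (g (σ i)) := by
  induction m with
  | zero =>
    have : ∀ E, matchSum A 0 E ∅ = 1 := by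
      intro E
      induction E with
      | nil => simp [matchSum]
      | cons e E ih => simp [matchSum, ih]
    simp [this]
  | succ m ih =>
    let f' : Fin m ↪ α := (Fin.succEmb m).trans f
    let g' : Fin (m + 1) → Fin m ↪ β := fun c =>
      (Fin.succEmb m).trans ((Equiv.swap 0 c).toEmbedding.trans g)
    have hrow : (Finset.univ.map (f.trans Function.Embedding.inl)) ∪
        (Finset.univ.map (g.trans Function.Embedding.inr)) = insert (Sum.inl (f 0))
          ((Finset.univ.map (f'.trans Function.Embedding.inl)) ∪
            (Finset.univ.map (g.trans Function.Embedding.inr))) := by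
      ext v
      simp [f', Fin.exists_fin_succ, eq_comm, or_assoc]
    have h0 : (Sum.inl (f 0) : α ⊕ β) ∉ (Finset.univ.map (f'.trans Function.Embedding.inl)) ∪
        (Finset.univ.map (g.trans Function.Embedding.inr)) := by
      simp [f', Fin.succ_ne_zero]
    have hdisj : Disjoint (Finset.univ.map (f'.trans (Function.Embedding.inl (β := β))))
        (Finset.univ.map (g.trans Function.Embedding.inr)) := by
      rw [Finset.disjoint_left]
      simp
    have hcol : ∀ c, ((Finset.univ.map (f'.trans Function.Embedding.inl)) ∪
        (Finset.univ.map (g.trans Function.Embedding.inr))).erase (Sum.inr (g c)) =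
        (Finset.univ.map (f'.trans Function.Embedding.inl)) ∪
        (Finset.univ.map ((g' c).trans Function.Embedding.inr)) := by
      intro c
      ext v
      rcases v with i | j
      · simp
      · simp only [Finset.mem_erase, Finset.mem_union, Finset.mem_map, Finset.mem_univ, true_and,
          Function.Embedding.trans_apply, Function.Embedding.inl_apply, reduceCtorEq,
          Function.Embedding.inr_apply, Sum.inr.injEq, exists_false, false_or, g',
          Equiv.coe_toEmbedding, Fin.coe_succEmb, ne_eq]
        constructor
        · rintro ⟨h1, k, rfl⟩
          have hk : Equiv.swap 0 c k ≠ 0 := by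
            intro h
            have := congrArg (Equiv.swap 0 c) h
            rw [Equiv.swap_apply_self, Equiv.swap_apply_left] at this
            exact h1 (by rw [this])
          obtain ⟨a, ha⟩ := Fin.exists_succ_eq.2 hk
          exact ⟨a, by rw [ha, Equiv.swap_apply_self]⟩
        · rintro ⟨a, rfl⟩
          refine ⟨fun h => Fin.succ_ne_zero a ?_, _, rfl⟩
          have := congrArg (Equiv.swap 0 c) (g.injective h)
          rwa [Equiv.swap_apply_self, Equiv.swap_apply_right] at this
    rw [hrow, matchSum_insert A 0 E h0, Fin.sum_perm_succ, Finset.sum_union hdisj, Finset.sum_map,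
      Finset.sum_map]
    simp only [Function.Embedding.trans_apply, Function.Embedding.inl_apply,
      Function.Embedding.inr_apply, edgeWeight_inl_inr A E hE, hE', if_true, hcol, ih]
    rw [Finset.sum_eq_zero fun x _ => by rw [edgeWeight_eq_zero A E (by simp), zero_mul]]
    simp [Fin.prod_univ_succ, Finset.mul_sum, f', g']

end MatchSum

/-- Eliminating an edge of marginal `γ`, when `p * s = q * q'`. -/
lemma add_mul_ge_of_mul_eq {p q q' s B γ : ℝ} (hp : 0 < p) (hq : 0 < q) (hq' : 0 < q') (hs : 0 < s)
    (h0 : 0 < γ) (h1 : γ < 1) (hc : q * q' = p * s)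
    (h : ∀ y z, 0 < y → 0 < z → B * (y * z) ^ γ ≤ p + q * y + q' * z + s * (y * z)) :
    B * ((γ ^ γ) ^ 2 * (1 - γ)) ≤ p + γ * (1 - γ) * s := by
  have hδ : 0 < 1 - γ := by linarith
  set δ := 1 - γ
  have hf := h (p * γ / (δ * q)) (p * γ / (δ * q')) (by positivity) (by positivity)
  have e1 : p * γ / (δ * q) * (p * γ / (δ * q')) = p * γ ^ 2 / (s * δ ^ 2) := by
    rw [div_mul_div_comm, div_eq_div_iff (by positivity) (by positivity)]
    linear_combination (-(p * γ ^ 2 * δ ^ 2)) * hc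
  have e2 : p + q * (p * γ / (δ * q)) + q' * (p * γ / (δ * q')) + s * (p * γ ^ 2 / (s * δ ^ 2)) =
      p / δ ^ 2 := by
    have : γ = 1 - δ := by simp [δ]
    rw [this]
    field_simp
    ring
  rw [e1, e2] at hf
  have hgm := Real.geom_mean_le_arith_mean2_weighted hδ.le h0.le
    (show 0 ≤ p / δ by positivity) (show 0 ≤ δ * s by positivity) (by simp [δ])
  have e3 : δ * (p / δ) + γ * (δ * s) = p + γ * δ * s := by field_simp
  rw [e3] at hgm
  refine le_trans ?_ hgm
  have e4 : (p / δ) ^ δ * (δ * s) ^ γ = p / δ ^ 2 * δ * ((s * δ ^ 2) / p) ^ γ := by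
    have hγ : δ = 1 - γ := rfl
    have : (p / δ) ^ δ = p / δ / (p / δ) ^ γ := by
      nth_rewrite 2 [hγ]
      rw [Real.rpow_sub (by positivity), Real.rpow_one]
    rw [this, div_mul_eq_mul_div, mul_div_assoc, ← Real.div_rpow (by positivity) (by positivity)]
    congr 1
    · field_simp
    · congr 1
      field_simp
  have e5 : ((γ ^ γ) ^ 2 : ℝ) = (p * γ ^ 2 / (s * δ ^ 2)) ^ γ * ((s * δ ^ 2) / p) ^ γ := by
    rw [← Real.mul_rpow (by positivity) (by positivity), sq, ← Real.mul_rpow h0.le h0.le]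
    congr 1
    field_simp
  rw [e4, e5]
  have := mul_le_mul_of_nonneg_right hf
    (show 0 ≤ δ * ((s * δ ^ 2) / p) ^ γ by positivity)
  calc _ = B * (p * γ ^ 2 / (s * δ ^ 2)) ^ γ * (δ * ((s * δ ^ 2) / p) ^ γ) := by ring
    _ ≤ _ := this
    _ = _ := by ring

lemma add_mul_ge_of_mul_le {p q q' s B γ : ℝ} (hp : 0 ≤ p) (hq : 0 ≤ q) (hq' : 0 ≤ q') (hs : 0 ≤ s)
    (h0 : 0 < γ) (h1 : γ < 1) (hc : q * q' ≤ p * s)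
    (h : ∀ y z, 0 < y → 0 < z → B * (y * z) ^ γ ≤ p + q * y + q' * z + s * (y * z)) :
    B * ((γ ^ γ) ^ 2 * (1 - γ)) ≤ p + γ * (1 - γ) * s := by
  refine le_of_forall_pos_le_add fun ε hε => ?_
  have hγ : 0 < 1 - γ := by linarith
  have hγ2 : γ * (1 - γ) ≤ 1 := by nlinarith
  set δ := ε / 2
  have hδ : 0 < δ := half_pos hε
  set Q := q + δ ^ 2 / (q' + 1)
  have hQ : 0 < Q := by positivity
  have hQq : q ≤ Q := by simp only [Q]; linarith [show 0 ≤ δ ^ 2 / (q' + 1) by positivity]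
  have hQ' : q' ≤ (p + δ) * (s + δ) / Q := by
    rw [le_div_iff₀ hQ]
    have : q' * (δ ^ 2 / (q' + 1)) ≤ δ ^ 2 := by
      rw [← mul_div_assoc, div_le_iff₀ (by positivity)]
      nlinarith [sq_nonneg δ]
    simp only [Q]
    nlinarith [mul_nonneg hp hδ.le, mul_nonneg hs hδ.le]
  have := add_mul_ge_of_mul_eq (p := p + δ) (q := Q) (q' := (p + δ) * (s + δ) / Q) (s := s + δ)
    (B := B) (by positivity) hQ (by positivity) (by positivity) h0 h1 (by field_simp)
    (fun y z hy hz => (h y z hy hz).trans (by gcongr <;> linarith))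
  refine this.trans ?_
  have h3 : γ * (1 - γ) * δ ≤ δ := by nlinarith
  have : ε = δ + δ := by simp [δ]
  rw [this]
  linarith

/-- The factor lost by `matchSum` on eliminating an edge of marginal `γ`. -/
noncomputable def edgeLoss (γ : ℝ) : ℝ := if γ = 1 then 1 else 1 - γ

noncomputable def edgeCoeff (γ : ℝ) : ℝ := if γ = 1 then 1 else γ * (1 - γ)

lemma edgeLoss_pos {γ : ℝ} (h1 : γ ≤ 1) : 0 < edgeLoss γ := by
  unfold edgeLoss
  split_ifs with h
  · exact one_pos
  · exact sub_pos.2 (lt_of_le_of_ne h1 h)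

lemma edgeCoeff_nonneg {γ : ℝ} (h0 : 0 ≤ γ) (h1 : γ ≤ 1) : 0 ≤ edgeCoeff γ := by
  unfold edgeCoeff
  split_ifs
  · exact zero_le_one
  · exact mul_nonneg h0 (sub_nonneg.2 h1)

lemma add_edgeCoeff_mul_ge {p q q' s B γ : ℝ} (hp : 0 ≤ p) (hq : 0 ≤ q) (hq' : 0 ≤ q')
    (hs : 0 ≤ s) (h0 : 0 ≤ γ) (h1 : γ ≤ 1) (hc : q * q' ≤ p * s)
    (h : ∀ y z, 0 < y → 0 < z → B * (y * z) ^ γ ≤ p + q * y + q' * z + s * (y * z)) :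
    B * ((γ ^ γ) ^ 2 * edgeLoss γ) ≤ p + edgeCoeff γ * s := by
  unfold edgeLoss edgeCoeff
  rcases h0.eq_or_lt with rfl | h0
  · simp only [Real.rpow_zero, mul_one] at h
    simp only [zero_ne_one, if_false, Real.rpow_zero]
    have : Filter.Tendsto (fun t : ℝ => p + q * t + q' * t + s * (t * t)) (nhdsWithin 0 (Set.Ioi 0))
        (nhds (p + q * 0 + q' * 0 + s * (0 * 0))) :=
      (Continuous.tendsto (by fun_prop) 0).mono_left nhdsWithin_le_nhds
    have := ge_of_tendsto this (b := B)
      (by filter_upwards [self_mem_nhdsWithin] with t ht using h t t ht ht)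
    simpa using this
  rcases h1.eq_or_lt with rfl | h1
  · simp only [Real.rpow_one] at h
    simp only [if_true, Real.rpow_one]
    have : Filter.Tendsto (fun t : ℝ => p * (t * t) + q * t + q' * t + s) (nhdsWithin 0 (Set.Ioi 0))
        (nhds (p * (0 * 0) + q * 0 + q' * 0 + s)) :=
      (Continuous.tendsto (by fun_prop) 0).mono_left nhdsWithin_le_nhds
    have := ge_of_tendsto this (b := B) (by
      filter_upwards [self_mem_nhdsWithin] with t ht
      have ht : 0 < t := ht
      have := h t⁻¹ t⁻¹ (by positivity) (by positivity)
      have := mul_le_mul_of_nonneg_right this (show 0 ≤ t * t by positivity)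
      field_simp at this
      linarith)
    simp at this ⊢
    linarith
  · rw [if_neg h1.ne, if_neg h1.ne]
    exact add_mul_ge_of_mul_le hp hq hq' hs h0 h1 hc h

lemma exists_matchSum_ge {α β : Type*} [DecidableEq α] [DecidableEq β] [Fintype α] [Fintype β]
    {γ : α → β → ℝ} (h0 : ∀ i j, 0 ≤ γ i j) (h1 : ∀ i j, γ i j ≤ 1) (U : Finset (α × β))
    (E : List (α × β)) (B : ℝ)
    (h : ∀ y z : α × β → ℝ, (∀ e, 0 < y e) → (∀ e, 0 < z e) →
      B * ∏ e ∈ U, (y e * z e) ^ γ e.1 e.2 ≤ matchSum (fun i j => edgeCoeff (γ i j))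
        (∑ e ∈ U, (Pi.single (Sum.inl e.1) (y e) + Pi.single (Sum.inr e.2) (z e))) E
          Finset.univ) :
    ∃ E' : List (α × β), E'.Perm (U.toList ++ E) ∧
      B * ∏ e ∈ U, ((γ e.1 e.2 ^ γ e.1 e.2) ^ 2 * edgeLoss (γ e.1 e.2)) ≤
        matchSum (fun i j => edgeCoeff (γ i j)) 0 E' Finset.univ := by
  induction U using Finset.induction_on generalizing E B with
  | empty =>
    exact ⟨E, by simp, by simpa using h 1 1 (fun _ => one_pos) fun _ => one_pos⟩
  | insert e U he ih =>
    obtain ⟨i, j⟩ := e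
    have hA : ∀ i j, 0 ≤ edgeCoeff (γ i j) := fun i j => edgeCoeff_nonneg (h0 i j) (h1 i j)
    obtain ⟨E', hE', hB⟩ := ih ((i, j) :: E)
      (B * ((γ i j ^ γ i j) ^ 2 * edgeLoss (γ i j))) fun y z hy hz => by
      set w : α ⊕ β → ℝ :=
        ∑ e ∈ U, (Pi.single (Sum.inl e.1) (y e) + Pi.single (Sum.inr e.2) (z e)) with hw_def
      have hw : ∀ v, 0 ≤ w v := by
        intro v
        simp only [w, Finset.sum_apply, Pi.add_apply]
        refine Finset.sum_nonneg fun e _ => add_nonneg ?_ ?_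
        · exact (Pi.single_nonneg.2 (hy e).le : (0 : α ⊕ β → ℝ) ≤ _) v
        · exact (Pi.single_nonneg.2 (hz e).le : (0 : α ⊕ β → ℝ) ≤ _) v
      set S : Finset (α ⊕ β) := (Finset.univ.erase (Sum.inl i)).erase (Sum.inr j)
      have hu : Sum.inl i ∉ S := by simp [S]
      have hv : Sum.inr j ∉ S := by simp [S]
      have huv : (Sum.inl i : α ⊕ β) ≠ Sum.inr j := by simp
      have hu' : Sum.inl i ∉ insert (Sum.inr j) S := by simp [S]
      have hv' : Sum.inr j ∉ insert (Sum.inl i) S := by simp [S]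
      have hS : Finset.univ = insert (Sum.inl i) (insert (Sum.inr j) S) := by
        ext v
        simp only [S, Finset.mem_insert, Finset.mem_erase, Finset.mem_univ]
        tauto
      have hcorr := (matchSum_correlation hA w E S huv hu hv).1 (by simp)
      have hnn := matchSum_nonneg hA hw E
      have hremove := add_edgeCoeff_mul_ge
        (B := B * ∏ e ∈ U, (y e * z e) ^ γ e.1 e.2)
        (hnn (insert (Sum.inl i) (insert (Sum.inr j) S))) (hnn (insert (Sum.inr j) S))
        (hnn (insert (Sum.inl i) S)) (hnn S) (h0 i j) (h1 i j) (by linarith) fun a b ha hb => by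
          have := h (Function.update y (i, j) a) (Function.update z (i, j) b)
            (fun e => by by_cases h : e = (i, j) <;> simp [h, ha, hy])
            (fun e => by by_cases h : e = (i, j) <;> simp [h, hb, hz])
          have hne : ∀ e ∈ U, e ≠ (i, j) := by rintro e h rfl; exact he h
          rw [Finset.prod_insert he, Finset.sum_insert he,
            Finset.prod_congr rfl fun e h => by
              rw [Function.update_of_ne (hne e h), Function.update_of_ne (hne e h)],
            Finset.sum_congr rfl fun e h => by
              rw [Function.update_of_ne (hne e h), Function.update_of_ne (hne e h)],
            ← hw_def, add_comm, ← add_assoc, add_right_comm, hS] at this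
          simp only [Function.update_self] at this
          rw [matchSum_add_single _ _ E hu', Finset.insert_comm,
            matchSum_add_single _ _ E hv', matchSum_add_single _ _ E hv] at this
          rw [Finset.insert_comm]
          linarith
      rw [matchSum, if_pos (by simp)]
      change _ ≤ _ + _ * matchSum _ w E S
      rw [hS]
      linarith
    refine ⟨E', hE'.trans ?_, ?_⟩
    · refine List.perm_middle.trans ?_
      rw [← List.cons_append]
      exact (Finset.toList_insert he).symm.append_right _
    · rw [Finset.prod_insert he, ← mul_assoc]
      exact hB

lemma prod_rpow_le_sum {ι : Type*} [Fintype ι] {g y : ι → ℝ} (hg : ∀ i, 0 ≤ g i)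
    (hg1 : ∑ i, g i = 1) (hy : ∀ i, 0 < y i) :
    ∏ i, (g i ^ g i)⁻¹ * y i ^ g i ≤ ∑ i, y i := by
  have := Real.geom_mean_le_arith_mean_weighted Finset.univ g (fun i => y i / g i)
    (fun i _ => hg i) hg1 (fun i _ => div_nonneg (hy i).le (hg i))
  refine le_trans (le_of_eq ?_) (this.trans (Finset.sum_le_sum fun i _ => ?_))
  · refine Finset.prod_congr rfl fun i _ => ?_
    rw [Real.div_rpow (hy i).le (hg i), div_eq_inv_mul]
  · rcases (hg i).eq_or_lt with h | h
    · rw [← h]; simpa using (hy i).le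
    · rw [mul_div_cancel₀ _ h.ne']

/-- Schrijver's permanent bound. -/
lemma prod_edgeLoss_le_sum_perm {n : ℕ} {γ : Fin n → Fin n → ℝ} (h0 : ∀ i j, 0 ≤ γ i j)
    (hr : ∀ i, ∑ j, γ i j = 1) (hc : ∀ j, ∑ i, γ i j = 1) :
    ∏ i, ∏ j, edgeLoss (γ i j) ≤
      ∑ σ : Equiv.Perm (Fin n), ∏ i, edgeCoeff (γ i (σ i)) := by
  have h1 : ∀ i j, γ i j ≤ 1 := fun i j => by
    rw [← hr i]
    exact Finset.single_le_sum (fun k _ => h0 i k) (Finset.mem_univ j)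
  have hg : ∀ i j, 0 < γ i j ^ γ i j := fun i j => by
    rcases (h0 i j).eq_or_lt with h | h
    · simp [← h]
    · positivity
  obtain ⟨E', hE', hB⟩ := exists_matchSum_ge h0 h1 Finset.univ []
    (∏ i, ∏ j, ((γ i j ^ γ i j) ^ 2)⁻¹) fun y z hy hz => by
    rw [matchSum, Fintype.prod_sum_type]
    have e1 : ∀ i, ∏ j, (γ i j ^ γ i j)⁻¹ * y (i, j) ^ γ i j ≤
        (∑ e : Fin n × Fin n, (Pi.single (Sum.inl e.1) (y e) + Pi.single (Sum.inr e.2) (z e)) :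
          Fin n ⊕ Fin n → ℝ) (Sum.inl i) := fun i => by
      refine (prod_rpow_le_sum (h0 i) (hr i) fun j => hy (i, j)).trans (le_of_eq ?_)
      simp only [Fintype.sum_prod_type_right, Finset.sum_apply, Pi.add_apply, Pi.single_apply]
      simp
    have e2 : ∀ j, ∏ i, (γ i j ^ γ i j)⁻¹ * z (i, j) ^ γ i j ≤
        (∑ e : Fin n × Fin n, (Pi.single (Sum.inl e.1) (y e) + Pi.single (Sum.inr e.2) (z e)) :
          Fin n ⊕ Fin n → ℝ) (Sum.inr j) := fun j => by
      refine (prod_rpow_le_sum (fun i => h0 i j) (hc j) fun i => hz (i, j)).trans (le_of_eq ?_)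
      simp [Fintype.sum_prod_type, Pi.single_apply]
    have e3 := mul_le_mul (Finset.prod_le_prod (fun i _ => Finset.prod_nonneg fun j _ =>
        mul_nonneg (inv_nonneg.2 (hg i j).le) (Real.rpow_nonneg (hy _).le _))
        fun i (_ : i ∈ Finset.univ) => e1 i)
      (Finset.prod_le_prod (fun j _ => Finset.prod_nonneg fun i _ =>
        mul_nonneg (inv_nonneg.2 (hg i j).le) (Real.rpow_nonneg (hz _).le _))
        fun j (_ : j ∈ Finset.univ) => e2 j)
      (Finset.prod_nonneg fun j _ => Finset.prod_nonneg fun i _ =>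
        mul_nonneg (inv_nonneg.2 (hg i j).le) (Real.rpow_nonneg (hz _).le _))
      (Finset.prod_nonneg fun i _ => le_trans (Finset.prod_nonneg fun j _ =>
        mul_nonneg (inv_nonneg.2 (hg i j).le) (Real.rpow_nonneg (hy _).le _)) (e1 i))
    refine le_of_eq_of_le ?_ e3
    rw [Finset.prod_comm (f := fun j i => (γ i j ^ γ i j)⁻¹ * z (i, j) ^ γ i j),
      Fintype.prod_prod_type]
    simp only [← Finset.prod_mul_distrib]
    refine Finset.prod_congr rfl fun i _ => Finset.prod_congr rfl fun j _ => ?_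
    rw [Real.mul_rpow (hy _).le (hz _).le, sq, mul_inv]
    ring
  have hnd : E'.Nodup := hE'.symm.nodup (by simpa using Finset.nodup_toList _)
  have := matchSum_zero_eq_sum_perm (fun i j => edgeCoeff (γ i j)) E' hnd
    (fun e => hE'.symm.subset (by simp)) (Function.Embedding.refl _) (Function.Embedding.refl _)
  simp only [Function.Embedding.refl_apply] at this
  rw [← this]
  refine le_of_eq_of_le ?_ (hB.trans (le_of_eq ?_))
  · rw [Fintype.prod_prod_type]
    simp only [← Finset.prod_mul_distrib]
    refine Finset.prod_congr rfl fun i _ => Finset.prod_congr rfl fun j _ => ?_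
    have := (hg i j).ne'
    field_simp
  · congr 1
    ext v
    rcases v with v | v <;> simp

/-- The number of permutations in the sequence `s` that send `i` to `j`. -/
def permType {n M : ℕ} (s : Fin M → Equiv.Perm (Fin n)) (i j : Fin n) : ℕ :=
  (Finset.univ.filter fun m => s m i = j).card

/-- The number of sequences of `M` permutations of type `K`. -/
def typeCount {n : ℕ} (M : ℕ) (K : Fin n → Fin n → ℕ) : ℕ :=
  (Finset.univ.filter fun s : Fin M → Equiv.Perm (Fin n) => permType s = K).card

/-- The number of sequences of `M + 1` permutations of type `K` starting with `σ`. -/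
def headCount {n : ℕ} (M : ℕ) (K : Fin n → Fin n → ℕ) (σ : Equiv.Perm (Fin n)) : ℕ :=
  (Finset.univ.filter fun s : Fin (M + 1) → Equiv.Perm (Fin n) => permType s = K ∧ s 0 = σ).card

def permIndicator {n : ℕ} (σ : Equiv.Perm (Fin n)) (i j : Fin n) : ℕ := if σ i = j then 1 else 0

/-- The nonnegative integer matrices all of whose rows and columns sum to `M`. -/
def IsMagic {n : ℕ} (M : ℕ) (K : Fin n → Fin n → ℕ) : Prop :=
  (∀ i, ∑ j, K i j = M) ∧ ∀ j, ∑ i, K i j = M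

lemma permType_cons {n M : ℕ} (σ : Equiv.Perm (Fin n)) (s : Fin M → Equiv.Perm (Fin n)) :
    permType (Fin.cons σ s : Fin (M + 1) → Equiv.Perm (Fin n)) = permIndicator σ + permType s := by
  ext i j
  simp only [permType, permIndicator, Finset.card_filter, Fin.sum_univ_succ, Fin.cons_zero,
    Fin.cons_succ, Pi.add_apply]

lemma headCount_add {n M : ℕ} (K : Fin n → Fin n → ℕ) (σ : Equiv.Perm (Fin n)) :
    headCount M (permIndicator σ + K) σ = typeCount M K := by
  unfold headCount typeCount
  symm
  refine Finset.card_bij (fun s _ => Fin.cons σ s) ?_ ?_ ?_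
  · intro s hs
    simpa [permType_cons] using hs
  · intro s _ t _ h
    exact (Fin.cons_injective2 h).2
  · intro s hs
    simp only [Finset.mem_filter, Finset.mem_univ, true_and] at hs
    refine ⟨Fin.tail s, ?_, ?_⟩
    · have := hs.1
      rw [← Fin.cons_self_tail s, hs.2, permType_cons] at this
      simpa using this
    · rw [← hs.2, Fin.cons_self_tail]

lemma headCount_eq_zero {n M : ℕ} {K : Fin n → Fin n → ℕ} {σ : Equiv.Perm (Fin n)}
    (h : ¬ permIndicator σ ≤ K) : headCount M K σ = 0 := by
  rw [headCount, Finset.card_eq_zero, Finset.filter_eq_empty_iff]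
  rintro s - ⟨h1, h2⟩
  apply h
  rw [← h1, ← Fin.cons_self_tail s, h2, permType_cons]
  exact le_self_add

lemma sum_headCount {n M : ℕ} (K : Fin n → Fin n → ℕ) :
    ∑ σ, headCount M K σ = typeCount (M + 1) K := by
  rw [typeCount, Finset.card_eq_sum_card_fiberwise (f := fun s => s 0) (t := Finset.univ)
    (fun _ _ => Finset.mem_coe.2 (Finset.mem_univ _))]
  simp [headCount, Finset.filter_filter]

lemma permType_comp {n M : ℕ} (s : Fin M → Equiv.Perm (Fin n)) (e : Equiv.Perm (Fin M)) :
    permType (s ∘ e) = permType s := by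
  ext i j
  simp only [permType, Finset.card_filter, Function.comp_apply]
  exact Equiv.sum_comp e fun m => if s m i = j then 1 else 0

lemma mul_sum_headCount {n M : ℕ} (K : Fin n → Fin n → ℕ) (i j : Fin n) :
    (M + 1) * ∑ σ : Equiv.Perm (Fin n), (if σ i = j then headCount M K σ else 0) =
      typeCount (M + 1) K * K i j := by
  have h1 : ∑ σ : Equiv.Perm (Fin n), (if σ i = j then headCount M K σ else 0) =
      (Finset.univ.filter fun s : Fin (M + 1) → Equiv.Perm (Fin n) =>
        permType s = K ∧ s 0 i = j).card := by
    rw [Finset.card_eq_sum_card_fiberwise (f := fun s => s 0) (t := Finset.univ)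
      (fun _ _ => Finset.mem_coe.2 (Finset.mem_univ _))]
    refine Finset.sum_congr rfl fun σ _ => ?_
    rw [headCount, Finset.filter_filter]
    split_ifs with h
    · congr 1
      ext s
      simp only [Finset.mem_filter, Finset.mem_univ, true_and]
      constructor
      · rintro ⟨h1, rfl⟩; exact ⟨⟨h1, h⟩, rfl⟩
      · rintro ⟨⟨h1, _⟩, h2⟩; exact ⟨h1, h2⟩
    · symm
      rw [Finset.card_eq_zero, Finset.filter_eq_empty_iff]
      rintro s - ⟨⟨_, h1⟩, rfl⟩
      exact h h1
  have h2 : ∀ m : Fin (M + 1), (Finset.univ.filter fun s : Fin (M + 1) → Equiv.Perm (Fin n) =>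
      permType s = K ∧ s m i = j).card = (Finset.univ.filter
        fun s : Fin (M + 1) → Equiv.Perm (Fin n) => permType s = K ∧ s 0 i = j).card := by
    intro m
    refine Finset.card_bij (fun s _ => s ∘ Equiv.swap 0 m) ?_ ?_ ?_
    · intro s hs
      simpa [permType_comp] using hs
    · intro s _ t _ h
      exact (Equiv.swap 0 m).surjective.injective_comp_right h
    · intro s hs
      refine ⟨s ∘ Equiv.swap 0 m, by simpa [permType_comp] using hs, ?_⟩
      ext1 k
      simp
  have h3 : ∑ m : Fin (M + 1), (Finset.univ.filter fun s : Fin (M + 1) → Equiv.Perm (Fin n) =>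
      permType s = K ∧ s m i = j).card = typeCount (M + 1) K * K i j := by
    simp only [Finset.card_filter]
    rw [Finset.sum_comm, typeCount, Finset.card_filter, Finset.sum_mul]
    refine Finset.sum_congr rfl fun s _ => ?_
    by_cases h : permType s = K
    · simp only [h, true_and, if_true, one_mul]
      rw [← h, permType, Finset.card_filter]
    · simp [h]
  rw [h1, ← h3, Finset.sum_congr rfl fun m _ => h2 m]
  simp

lemma sum_permIndicator_row {n : ℕ} (σ : Equiv.Perm (Fin n)) (i : Fin n) :
    ∑ j, permIndicator σ i j = 1 := by
  simp [permIndicator]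

lemma sum_permIndicator_col {n : ℕ} (σ : Equiv.Perm (Fin n)) (j : Fin n) :
    ∑ i, permIndicator σ i j = 1 := by
  simp [permIndicator, ← Equiv.eq_symm_apply]

lemma isMagic_permIndicator_add {n M : ℕ} {σ : Equiv.Perm (Fin n)} {K : Fin n → Fin n → ℕ} :
    IsMagic (M + 1) (permIndicator σ + K) ↔ IsMagic M K := by
  simp only [IsMagic, Pi.add_apply, Finset.sum_add_distrib, sum_permIndicator_row,
    sum_permIndicator_col, add_comm 1, add_left_inj]

lemma isMagic_permType {n M : ℕ} (s : Fin M → Equiv.Perm (Fin n)) : IsMagic M (permType s) := by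
  constructor
  · intro i
    simp only [permType, Finset.card_filter]
    rw [Finset.sum_comm]
    simp
  · intro j
    simp only [permType, Finset.card_filter]
    rw [Finset.sum_comm]
    simp [← Equiv.eq_symm_apply]

noncomputable def betheFactor (M k : ℕ) : ℝ := (M - k).factorial / (k.factorial * M.factorial)

/-- The coefficient of `θ ^ K` in the average permanent of the `M`-liftings of `θ`. -/
noncomputable def betheCount {n : ℕ} (M : ℕ) (K : Fin n → Fin n → ℕ) : ℝ :=
  ∏ i, ((M.factorial : ℝ) ^ 2 * ∏ j, betheFactor M (K i j))

lemma betheFactor_pos (M k : ℕ) : 0 < betheFactor M k := by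
  unfold betheFactor; positivity

lemma betheCount_pos {n : ℕ} (M : ℕ) (K : Fin n → Fin n → ℕ) : 0 < betheCount M K :=
  Finset.prod_pos fun _ _ => mul_pos (by positivity) (Finset.prod_pos fun _ _ => betheFactor_pos _ _)

lemma betheFactor_mul_edgeLoss {M k : ℕ} (hk : k ≤ M) :
    betheFactor M k * edgeLoss (k / (M + 1 : ℕ)) = betheFactor (M + 1) k := by
  have h1 : (k : ℝ) / (M + 1 : ℕ) ≠ 1 := by
    rw [Ne, div_eq_one_iff_eq (by positivity), Nat.cast_inj]
    omega
  obtain ⟨l, rfl⟩ := Nat.exists_eq_add_of_le hk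
  rw [edgeLoss, if_neg h1, betheFactor, betheFactor, show k + l + 1 - k = l + 1 by omega,
    Nat.add_sub_cancel_left, Nat.factorial_succ, Nat.factorial_succ]
  push_cast
  field_simp
  ring

lemma betheFactor_mul_edgeLoss_succ {M k : ℕ} (hk : k ≤ M) :
    betheFactor M k * edgeLoss ((1 + k : ℕ) / (M + 1 : ℕ)) =
      (M + 1 : ℕ) ^ 2 * edgeCoeff ((1 + k : ℕ) / (M + 1 : ℕ)) * betheFactor (M + 1) (1 + k) := by
  obtain ⟨l, rfl⟩ := Nat.exists_eq_add_of_le hk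
  rw [betheFactor, betheFactor, show k + l + 1 - (1 + k) = l by omega,
    Nat.add_sub_cancel_left, add_comm 1 k, Nat.factorial_succ, Nat.factorial_succ]
  rcases Nat.eq_zero_or_pos l with rfl | hl
  · have : (((k + 1 : ℕ) : ℝ) / (k + 0 + 1 : ℕ)) = 1 := div_self (by positivity)
    rw [this, edgeLoss, edgeCoeff]
    simp
    field_simp
  · have h1 : ((k + 1 : ℕ) : ℝ) / (k + l + 1 : ℕ) ≠ 1 := by
      rw [Ne, div_eq_one_iff_eq (by positivity), Nat.cast_inj]
      omega
    rw [edgeLoss, edgeCoeff, if_neg h1, if_neg h1]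
    push_cast
    field_simp

lemma betheCount_mul_edgeLoss {n M : ℕ} {σ : Equiv.Perm (Fin n)} {K : Fin n → Fin n → ℕ}
    (hK : IsMagic M K) :
    betheCount M K * ∏ i, ∏ j, edgeLoss ((permIndicator σ + K) i j / (M + 1 : ℕ)) =
      betheCount (M + 1) (permIndicator σ + K) *
        ∏ i, edgeCoeff ((permIndicator σ + K) i (σ i) / (M + 1 : ℕ)) := by
  have hle : ∀ i j, K i j ≤ M := fun i j => by
    rw [← hK.1 i]
    exact Finset.single_le_sum (fun _ _ => Nat.zero_le _) (Finset.mem_univ j)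
  rw [betheCount, betheCount, ← Finset.prod_mul_distrib, ← Finset.prod_mul_distrib]
  refine Finset.prod_congr rfl fun i _ => ?_
  rw [mul_assoc, ← Finset.prod_mul_distrib,
    ← Finset.mul_prod_erase _ _ (Finset.mem_univ (σ i)),
    ← Finset.mul_prod_erase _ (fun j => betheFactor _ _) (Finset.mem_univ (σ i))]
  rw [Finset.prod_congr rfl fun j hj => show betheFactor M (K i j) *
    edgeLoss ((permIndicator σ + K) i j / (M + 1 : ℕ)) =
      betheFactor (M + 1) ((permIndicator σ + K) i j) by
    have : permIndicator σ i j = 0 := if_neg (Finset.ne_of_mem_erase hj).symm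
    rw [Pi.add_apply, Pi.add_apply, this, zero_add, betheFactor_mul_edgeLoss (hle i j)]]
  have : permIndicator σ i (σ i) = 1 := if_pos rfl
  rw [Pi.add_apply, Pi.add_apply, this, betheFactor_mul_edgeLoss_succ (hle i _),
    Nat.factorial_succ]
  push_cast
  ring

lemma IsMagic.sum_div_row {n M : ℕ} {K : Fin n → Fin n → ℕ} (hK : IsMagic (M + 1) K) (i : Fin n) :
    ∑ j, (K i j : ℝ) / (M + 1 : ℕ) = 1 := by
  rw [← Finset.sum_div, ← Nat.cast_sum, hK.1 i, div_self (by positivity)]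

lemma IsMagic.sum_div_col {n M : ℕ} {K : Fin n → Fin n → ℕ} (hK : IsMagic (M + 1) K) (j : Fin n) :
    ∑ i, (K i j : ℝ) / (M + 1 : ℕ) = 1 := by
  rw [← Finset.sum_div, ← Nat.cast_sum, hK.2 j, div_self (by positivity)]

lemma IsMagic.le {n M : ℕ} {K : Fin n → Fin n → ℕ} (hK : IsMagic M K) (i j : Fin n) :
    K i j ≤ M := by
  rw [← hK.1 i]
  exact Finset.single_le_sum (fun _ _ => Nat.zero_le _) (Finset.mem_univ j)

lemma IsMagic.div_le_one {n M : ℕ} {K : Fin n → Fin n → ℕ} (hK : IsMagic (M + 1) K)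
    (i j : Fin n) : (K i j : ℝ) / (M + 1 : ℕ) ≤ 1 :=
  div_le_one_of_le₀ (by exact_mod_cast hK.le i j) (by positivity)

lemma betheCount_le_typeCount {n : ℕ} (M : ℕ) (K : Fin n → Fin n → ℕ) (hK : IsMagic M K) :
    betheCount M K ≤ typeCount M K := by
  induction M generalizing K with
  | zero =>
    have h0 : K = 0 := by
      ext i j
      exact Nat.le_zero.1 (hK.le i j)
    subst h0
    have h1 : typeCount 0 (0 : Fin n → Fin n → ℕ) = 1 := by
      rw [typeCount, Finset.filter_true_of_mem]
      · simp
      · intro s _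
        ext i j
        simp [permType]
    simp [h1, betheCount, betheFactor]
  | succ M ih =>
    set γ : Fin n → Fin n → ℝ := fun i j => K i j / (M + 1 : ℕ)
    have h0 : ∀ i j, 0 ≤ γ i j := fun i j => by positivity
    have hL : 0 < ∏ i, ∏ j, edgeLoss (γ i j) := Finset.prod_pos fun i _ => Finset.prod_pos
      fun j _ => edgeLoss_pos (hK.div_le_one i j)
    have hσ : ∀ σ, betheCount (M + 1) K * ∏ i, edgeCoeff (γ i (σ i)) ≤
        headCount M K σ * ∏ i, ∏ j, edgeLoss (γ i j) := by
      intro σ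
      by_cases h : permIndicator σ ≤ K
      · obtain ⟨K', rfl⟩ := exists_add_of_le h
        rw [isMagic_permIndicator_add] at hK
        rw [headCount_add, ← betheCount_mul_edgeLoss hK]
        exact mul_le_mul_of_nonneg_right (ih K' hK) hL.le
      · have : ∃ i, K i (σ i) = 0 := by
          by_contra! hne
          refine h fun i j => ?_
          rw [permIndicator]
          split_ifs with hj
          · rw [← hj]; exact Nat.one_le_iff_ne_zero.2 (hne i)
          · exact Nat.zero_le _
        obtain ⟨i, hi⟩ := this
        rw [Finset.prod_eq_zero (Finset.mem_univ i) (by simp [γ, hi, edgeCoeff]), mul_zero]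
        positivity
    have := Finset.sum_le_sum fun σ (_ : σ ∈ Finset.univ) => hσ σ
    rw [← Finset.mul_sum, ← Finset.sum_mul, ← Nat.cast_sum, sum_headCount] at this
    have h2 := mul_le_mul_of_nonneg_left
      (prod_edgeLoss_le_sum_perm h0 hK.sum_div_row hK.sum_div_col) (betheCount_pos (M + 1) K).le
    exact le_of_mul_le_mul_right (h2.trans this) hL

lemma log_edgeCoeff {γ : ℝ} (h : 0 < γ) :
    Real.log (edgeCoeff γ) = Real.log γ + Real.log (1 - γ) := by
  unfold edgeCoeff
  split_ifs with h1
  · simp [h1]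
  · exact Real.log_mul h.ne' (sub_ne_zero.2 (Ne.symm h1))

lemma log_edgeLoss (γ : ℝ) : Real.log (edgeLoss γ) = Real.log (1 - γ) := by
  unfold edgeLoss
  split_ifs with h1
  · simp [h1]
  · rfl

lemma typeCount_one_le {n : ℕ} (K : Fin n → Fin n → ℕ) (hK : IsMagic 1 K) :
    (typeCount 1 K : ℝ) ≤ betheCount 1 K := by
  have h1 : betheCount 1 K = 1 := by
    refine Finset.prod_eq_one fun i _ => ?_
    rw [Finset.prod_eq_one fun j _ => ?_]
    · simp
    · have := hK.le i j
      interval_cases h : K i j <;> simp [betheFactor]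
  rw [h1, Nat.cast_le_one, typeCount, Finset.card_le_one]
  intro s hs t ht
  simp only [Finset.mem_filter, Finset.mem_univ, true_and] at hs ht
  ext m i : 2
  have := congrFun (congrFun (hs.trans ht.symm) i) (s m i)
  have hm : m = 0 := Subsingleton.elim _ _
  subst hm
  simp only [permType, Finset.card_filter, Fin.sum_univ_succ] at this
  by_contra hne
  simp [Ne.symm hne] at this

lemma typeCount_le {n : ℕ} (M : ℕ) (K : Fin n → Fin n → ℕ) (hK : IsMagic (M + 1) K) :
    (typeCount (M + 1) K : ℝ) ≤ Real.exp (M * (n * (Real.log 2 / 2))) * betheCount (M + 1) K := by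
  induction M generalizing K with
  | zero => simpa using typeCount_one_le K hK
  | succ M ih =>
    set γ : Fin n → Fin n → ℝ := fun i j => K i j / (M + 1 + 1 : ℕ)
    have h0 : ∀ i j, 0 ≤ γ i j := fun i j => by positivity
    rcases Nat.eq_zero_or_pos (typeCount (M + 1 + 1) K) with hN | hN
    · rw [hN, Nat.cast_zero]
      exact mul_nonneg (Real.exp_nonneg _) (betheCount_pos _ _).le
    have hN' : (0 : ℝ) < typeCount (M + 1 + 1) K := by exact_mod_cast hN
    have hmarg : ∀ i j, ∑ σ : Equiv.Perm (Fin n),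
        (if σ i = j then (headCount (M + 1) K σ : ℝ) else 0) =
          typeCount (M + 1 + 1) K * γ i j := by
      intro i j
      have := congrArg (Nat.cast : ℕ → ℝ) (mul_sum_headCount (M := M + 1) K i j)
      push_cast at this
      simp only [γ]
      push_cast
      field_simp
      linarith
    have hbound := mul_log_sum_perm_le (x := fun σ => (headCount (M + 1) K σ : ℝ))
      (fun σ => Nat.cast_nonneg _) hN' (by rw [← sum_headCount]; push_cast; rfl) h0 hmarg
    set h : Fin n → Fin n → ℝ := fun i j => Real.log (γ i j) + Real.log (1 - γ i j)
    set c : ℝ := M * (n * (Real.log 2 / 2)) + Real.log (betheCount (M + 1 + 1) K) -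
      ∑ i, ∑ j, Real.log (1 - γ i j) with hc
    have hσ : ∀ σ, (headCount (M + 1) K σ : ℝ) * Real.log (headCount (M + 1) K σ) ≤
        headCount (M + 1) K σ * c + headCount (M + 1) K σ * ∑ i, h i (σ i) := by
      intro σ
      rcases Nat.eq_zero_or_pos (headCount (M + 1) K σ) with hx | hx
      · simp [hx]
      have hle : permIndicator σ ≤ K := by
        by_contra hle
        exact hx.ne' (headCount_eq_zero hle)
      rw [← mul_add]
      refine mul_le_mul_of_nonneg_left ?_ (Nat.cast_nonneg _)
      obtain ⟨K', hK'⟩ := exists_add_of_le hle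
      have hmag : IsMagic (M + 1) K' := by rwa [hK', isMagic_permIndicator_add] at hK
      have hx' : headCount (M + 1) K σ = typeCount (M + 1) K' := by rw [hK', headCount_add]
      have e1 := betheCount_mul_edgeLoss (σ := σ) hmag
      rw [← hK'] at e1
      have hpos : ∀ i, 0 < γ i (σ i) := fun i => by
        have : 1 ≤ K i (σ i) := by
          rw [hK', Pi.add_apply, Pi.add_apply, permIndicator, if_pos rfl]; omega
        simp only [γ]
        positivity
      have hLpos : ∀ i j, 0 < edgeLoss (γ i j) := fun i j => edgeLoss_pos (hK.div_le_one i j)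
      have hL : 0 < ∏ i, ∏ j, edgeLoss (γ i j) :=
        Finset.prod_pos fun i _ => Finset.prod_pos fun j _ => hLpos i j
      have hCpos : ∀ i, edgeCoeff (γ i (σ i)) ≠ 0 := fun i => by
        intro h
        refine (mul_pos (betheCount_pos (M + 1) K') hL).ne' (e1.trans ?_)
        rw [Finset.prod_eq_zero (Finset.mem_univ i) h, mul_zero]
      have e2 := congrArg Real.log e1
      rw [Real.log_mul (betheCount_pos _ _).ne' hL.ne',
        Real.log_mul (betheCount_pos _ _).ne' (Finset.prod_ne_zero_iff.2 fun i _ => hCpos i),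
        Real.log_prod fun i _ => hCpos i, Real.log_prod fun i _ =>
          (Finset.prod_pos fun j (_ : j ∈ Finset.univ) => hLpos i j).ne',
        Finset.sum_congr rfl fun i _ => Real.log_prod fun j (_ : j ∈ Finset.univ) =>
          (hLpos i j).ne',
        Finset.sum_congr rfl fun i _ => log_edgeCoeff (hpos i)] at e2
      simp only [log_edgeLoss] at e2
      have e3 := Real.log_le_log (by exact_mod_cast hx' ▸ hx) (ih K' hmag)
      rw [Real.log_mul (Real.exp_ne_zero _) (betheCount_pos _ _).ne', Real.log_exp, ← hx'] at e3
      simp only [h, hc, γ] at e2 ⊢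
      linarith
    have hsum := Finset.sum_le_sum fun σ (_ : σ ∈ Finset.univ) => hσ σ
    rw [Finset.sum_add_distrib, ← Finset.sum_mul, ← Nat.cast_sum, sum_headCount,
      sum_mul_sum_perm_apply hmarg h] at hsum
    have hcancel : -∑ i, ∑ j, Real.log (1 - γ i j) + ∑ i, ∑ j, γ i j * h i j +
        ∑ i, ∑ j, ((1 - γ i j) * Real.log (1 - γ i j) - γ i j * Real.log (γ i j)) = 0 := by
      simp only [← Finset.sum_neg_distrib, ← Finset.sum_add_distrib]
      refine Finset.sum_eq_zero fun i _ => Finset.sum_eq_zero fun j _ => ?_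
      simp only [h]
      ring
    have hlog : Real.log (typeCount (M + 1 + 1) K) ≤ (M + 1) * (n * (Real.log 2 / 2)) +
        Real.log (betheCount (M + 1 + 1) K) := by
      refine le_of_mul_le_mul_left ?_ hN'
      refine hbound.trans ((add_le_add_left hsum _).trans (le_of_eq ?_))
      rw [hc]
      linear_combination (typeCount (M + 1 + 1) K : ℝ) * hcancel
    rw [← Real.log_le_log_iff hN' (mul_pos (Real.exp_pos _) (betheCount_pos _ _)),
      Real.log_mul (Real.exp_ne_zero _) (betheCount_pos _ _).ne', Real.log_exp]
    push_cast
    exact hlog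

lemma card_perm_comp_eq {α γ : Type*} [Fintype α] [DecidableEq α] [Fintype γ] [DecidableEq γ]
    {f₀ f : α → γ} (h : ∀ c, (Finset.univ.filter fun a => f a = c).card =
      (Finset.univ.filter fun a => f₀ a = c).card) :
    (Finset.univ.filter fun g : Equiv.Perm α => f₀ ∘ g = f).card =
      ∏ c, ((Finset.univ.filter fun a => f₀ a = c).card).factorial := by
  have e : ∀ c, Nonempty ({a // f a = c} ≃ {a // f₀ a = c}) := fun c =>
    Fintype.card_eq.1 (by rw [Fintype.card_subtype, Fintype.card_subtype, h])
  let g₀ : Equiv.Perm α := Equiv.ofFiberEquiv fun c => (e c).some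
  have hg₀ : f₀ ∘ g₀ = f := funext fun a => Equiv.ofFiberEquiv_map _ a
  have h2 := DomMulAct.stabilizer_card f₀
  simp only [Fintype.card_subtype] at h2
  rw [← h2]
  refine Finset.card_bij (fun g _ => g * g₀⁻¹) ?_ ?_ ?_
  · intro g hg
    simp only [Finset.mem_filter, Finset.mem_univ, true_and] at hg ⊢
    rw [Equiv.Perm.coe_mul, ← Function.comp_assoc, hg, ← hg₀, Function.comp_assoc,
      ← Equiv.Perm.coe_mul, mul_inv_cancel]
    rfl
  · intro g _ g' _ h
    exact mul_right_cancel h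
  · intro g hg
    simp only [Finset.mem_filter, Finset.mem_univ, true_and] at hg
    refine ⟨g * g₀, ?_, by simp⟩
    simp only [Finset.mem_filter, Finset.mem_univ, true_and]
    rw [Equiv.Perm.coe_mul, ← Function.comp_assoc, hg, hg₀]

lemma card_fun_mul_prod_factorial {M : ℕ} {γ : Type*} [Fintype γ] [DecidableEq γ] {k : γ → ℕ}
    (hk : ∑ c, k c = M) :
    (Finset.univ.filter fun f : Fin M → γ =>
      ∀ c, (Finset.univ.filter fun a => f a = c).card = k c).card * ∏ c, (k c).factorial =
        M.factorial := by
  obtain ⟨f₀, hf₀⟩ : ∃ f₀ : Fin M → γ, ∀ c, (Finset.univ.filter fun a => f₀ a = c).card = k c := by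
    have e : Nonempty (Fin M ≃ Σ c, Fin (k c)) := Fintype.card_eq.1 (by simp [hk])
    refine ⟨fun a => (e.some a).1, fun c => ?_⟩
    rw [← Fintype.card_subtype, Fintype.card_congr ((e.some.subtypeEquiv (fun _ => Iff.rfl) :
      {a // (e.some a).1 = c} ≃ {p : Σ c, Fin (k c) // p.1 = c}).trans
        (Equiv.sigmaSubtype c)), Fintype.card_fin]
  have h1 := Finset.card_eq_sum_card_fiberwise (f := fun g : Equiv.Perm (Fin M) => f₀ ∘ g)
    (s := Finset.univ) (t := Finset.univ.filter fun f : Fin M → γ =>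
      ∀ c, (Finset.univ.filter fun a => f a = c).card = k c) (by
    intro g _
    simp only [Finset.coe_filter, Finset.mem_univ, true_and, Set.mem_ofPred_eq]
    intro c
    rw [← hf₀]
    simp only [Finset.card_filter, Function.comp_apply]
    exact Equiv.sum_comp g fun a => if f₀ a = c then 1 else 0)
  rw [Finset.card_univ, Fintype.card_perm, Fintype.card_fin] at h1
  rw [h1, Finset.sum_congr rfl fun f hf => card_perm_comp_eq (f₀ := f₀) fun c => by
    rw [hf₀, (Finset.mem_filter.1 hf).2 c]]
  simp [hf₀]

lemma card_perm_eqOn {α : Type*} [Fintype α] [DecidableEq α] {s : Finset α} {g : α → α}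
    (hg : Set.InjOn g s) :
    (Finset.univ.filter fun π : Equiv.Perm α => ∀ a ∈ s, π a = g a).card =
      (Fintype.card α - s.card).factorial := by
  obtain ⟨e, he⟩ := Finset.exists_equiv_extend_of_card_eq (t := Finset.univ)
    (Finset.card_univ (α := α)).symm (Finset.subset_univ (s.image g)) hg
  let π₀ : Equiv.Perm α := e.trans (Equiv.subtypeUnivEquiv Finset.mem_univ)
  have hπ₀ : ∀ a ∈ s, π₀ a = g a := he
  have h1 : Fintype.card (Equiv.Perm {a // a ∉ s}) = (Fintype.card α - s.card).factorial := by
    rw [Fintype.card_perm, Fintype.card_subtype_compl, Fintype.card_coe]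
  rw [← h1, Fintype.card_congr (Equiv.Perm.subtypeEquivSubtypePerm fun a => a ∉ s),
    Fintype.card_subtype]
  refine Finset.card_bij (fun π _ => π₀⁻¹ * π) ?_ ?_ ?_
  · intro π hπ
    simp only [Finset.mem_filter, Finset.mem_univ, true_and, not_not] at hπ ⊢
    intro a ha
    rw [Equiv.Perm.mul_apply, hπ a ha, ← hπ₀ a ha, ← Equiv.Perm.mul_apply, inv_mul_cancel,
      Equiv.Perm.one_apply]
  · intro π _ π' _ h
    exact mul_left_cancel h
  · intro π hπ
    simp only [Finset.mem_filter, Finset.mem_univ, true_and, not_not] at hπ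
    refine ⟨π₀ * π, ?_, by simp⟩
    simp only [Finset.mem_filter, Finset.mem_univ, true_and]
    intro a ha
    rw [Equiv.Perm.mul_apply, hπ a ha, hπ₀ a ha]

/-- The number of entries that a permutation of `Fin n × Fin M` has in each block. -/
def blockType {n M : ℕ} (τ : Equiv.Perm (Fin n × Fin M)) (i j : Fin n) : ℕ :=
  (Finset.univ.filter fun m => (τ (i, m)).1 = j).card

lemma card_filter_fst_eq {n M : ℕ} (j : Fin n) :
    (Finset.univ.filter fun p : Fin n × Fin M => p.1 = j).card = M := by
  rw [Finset.card_filter, Fintype.sum_prod_type, Finset.sum_comm]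
  simp

lemma isMagic_blockType {n M : ℕ} (τ : Equiv.Perm (Fin n × Fin M)) : IsMagic M (blockType τ) := by
  constructor
  · intro i
    simp only [blockType, Finset.card_filter]
    rw [Finset.sum_comm]
    simp
  · intro j
    simp only [blockType, Finset.card_filter]
    rw [← Fintype.sum_prod_type' (f := fun i m => if (τ (i, m)).1 = j then 1 else 0),
      Equiv.sum_comp τ fun p => if p.1 = j then 1 else 0, ← Finset.card_filter,
      card_filter_fst_eq]

lemma card_blockType {n M : ℕ} {K : Fin n → Fin n → ℕ} (hK : IsMagic M K) :
    (Finset.univ.filter fun τ : Equiv.Perm (Fin n × Fin M) => blockType τ = K).card *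
      ∏ i, ∏ j, (K i j).factorial = ∏ _i : Fin n, M.factorial ^ 2 := by
  let T : Finset (Fin n × Fin M → Fin n) := Finset.univ.filter fun f =>
    ∀ i j, (Finset.univ.filter fun m => f (i, m) = j).card = K i j
  have hT : T.card * ∏ i, ∏ j, (K i j).factorial = ∏ _i : Fin n, M.factorial := by
    have : T.card = ∏ i, (Finset.univ.filter fun h : Fin M → Fin n =>
        ∀ j, (Finset.univ.filter fun m => h m = j).card = K i j).card := by
      rw [← Fintype.card_piFinset]
      refine Finset.card_bij (fun f _ i m => f (i, m)) ?_ ?_ ?_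
      · intro f hf
        simpa [T] using hf
      · intro f _ f' _ h
        ext1 ⟨i, m⟩
        exact congrFun (congrFun h i) m
      · intro h hh
        exact ⟨fun p => h p.1 p.2, by simpa [T] using hh, rfl⟩
    rw [this, ← Finset.prod_mul_distrib]
    refine Finset.prod_congr rfl fun i _ => ?_
    convert card_fun_mul_prod_factorial (hK.1 i)
  have hfib : (Finset.univ.filter fun τ : Equiv.Perm (Fin n × Fin M) => blockType τ = K).card =
      T.card * ∏ _i : Fin n, M.factorial := by
    rw [Finset.card_eq_sum_card_fiberwise (f := fun τ : Equiv.Perm (Fin n × Fin M) =>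
      Prod.fst ∘ τ) (t := T) (by
        intro τ hτ
        simp only [Finset.coe_filter, Finset.mem_univ, true_and, Set.mem_ofPred_eq] at hτ
        simp [T, ← hτ, blockType])]
    rw [Finset.sum_congr rfl (g := fun _ => ∏ _i : Fin n, M.factorial), Finset.sum_const,
      smul_eq_mul]
    intro f hf
    have hf' : ∀ i j, (Finset.univ.filter fun m => f (i, m) = j).card = K i j := by
      simpa [T] using hf
    have := card_perm_comp_eq (f₀ := (Prod.fst : Fin n × Fin M → Fin n)) (f := f) (fun j => by
      refine Eq.trans ?_ ((hK.2 j).trans (card_filter_fst_eq j).symm)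
      simp only [← hf', Finset.card_filter]
      rw [Fintype.sum_prod_type])
    simp only [card_filter_fst_eq] at this
    rw [← this, Finset.filter_filter]
    congr 1
    ext τ
    simp only [Finset.mem_filter, Finset.mem_univ, true_and, and_iff_right_iff_imp]
    rintro rfl
    ext i j
    exact hf' i j
  rw [hfib, mul_right_comm, hT, ← Finset.prod_mul_distrib]
  simp only [sq]

lemma prod_comp_eq_prod_pow {n M : ℕ} (a : Fin n → ℝ) (f : Fin M → Fin n) :
    ∏ m, a (f m) = ∏ j, a j ^ (Finset.univ.filter fun m => f m = j).card := by
  rw [← Finset.prod_fiberwise Finset.univ f]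
  refine Finset.prod_congr rfl fun j _ => ?_
  rw [Finset.prod_congr rfl fun m hm => by rw [(Finset.mem_filter.1 hm).2], Finset.prod_const]

lemma sum_perm'_liftMat {n M : ℕ} (θ : Matrix (Fin n) (Fin n) ℝ) :
    ∑ P : Fin n → Fin n → Equiv.Perm (Fin M), perm' (liftMat θ P) =
      ∑ τ : Equiv.Perm (Fin n × Fin M), ∏ i, ∏ j,
        ((M - blockType τ i j).factorial * θ i j ^ blockType τ i j : ℝ) := by
  unfold perm'
  rw [Finset.sum_comm]
  refine Finset.sum_congr rfl fun τ _ => ?_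
  have h1 : ∀ P : Fin n → Fin n → Equiv.Perm (Fin M), ∏ p, liftMat θ P p (τ p) =
      (∏ i, ∏ j, θ i j ^ blockType τ i j) *
        if ∀ i j, ∀ m ∈ Finset.univ.filter (fun m => (τ (i, m)).1 = j), P i j m = (τ (i, m)).2
          then 1 else 0 := by
    intro P
    simp only [liftMat, Matrix.of_apply]
    rw [Finset.prod_mul_distrib, Fintype.prod_prod_type,
      Finset.prod_congr rfl fun i _ => prod_comp_eq_prod_pow (θ i) fun m => (τ (i, m)).1]
    congr 1
    rw [Finset.prod_ite_zero, Finset.prod_const_one]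
    split_ifs with h h' h'
    · rfl
    · refine absurd (fun i j m hm => ?_) h'
      obtain rfl := (Finset.mem_filter.1 hm).2
      exact h (i, m) (Finset.mem_univ _)
    · refine absurd (fun p _ => ?_) h
      exact h' p.1 _ p.2 (by simp)
    · rfl
  have h2 : (Finset.univ.filter fun P : Fin n → Fin n → Equiv.Perm (Fin M) => ∀ i j,
      ∀ m ∈ Finset.univ.filter (fun m => (τ (i, m)).1 = j), P i j m = (τ (i, m)).2).card =
      ∏ i, ∏ j, (M - blockType τ i j).factorial := by
    have h3 : ∀ i j, (Finset.univ.filter fun π : Equiv.Perm (Fin M) =>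
        ∀ m ∈ Finset.univ.filter (fun m => (τ (i, m)).1 = j), π m = (τ (i, m)).2).card =
        (M - blockType τ i j).factorial := by
      intro i j
      have := card_perm_eqOn (s := Finset.univ.filter fun m => (τ (i, m)).1 = j)
        (g := fun m => (τ (i, m)).2) fun m hm m' hm' h => by
          simp only [Finset.coe_filter, Finset.mem_univ, true_and, Set.mem_ofPred_eq] at hm hm'
          simpa using τ.injective (Prod.ext (hm.trans hm'.symm) h)
      rw [Fintype.card_fin] at this
      convert this
      rfl
    simp only [← h3, ← Fintype.card_piFinset]
    congr 1
    ext P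
    simp
  simp only [h1, ← Finset.mul_sum, Finset.prod_mul_distrib]
  rw [Finset.sum_boole, h2, mul_comm]
  push_cast
  rfl

instance {n M : ℕ} : DecidablePred (IsMagic (n := n) M) := fun _ => inferInstanceAs (Decidable (_ ∧ _))

/-- The finset of nonnegative integer matrices all of whose rows and columns sum to `M`. -/
def magicMatrices (n M : ℕ) : Finset (Fin n → Fin n → ℕ) :=
  (Fintype.piFinset fun _ => Fintype.piFinset fun _ => Finset.range (M + 1)).filter (IsMagic M)

lemma mem_magicMatrices {n M : ℕ} {K : Fin n → Fin n → ℕ} :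
    K ∈ magicMatrices n M ↔ IsMagic M K := by
  simp only [magicMatrices, Finset.mem_filter, Fintype.mem_piFinset, Finset.mem_range,
    and_iff_right_iff_imp]
  exact fun h i j => Nat.lt_succ_of_le (h.le i j)

lemma perm'_pow_eq {n : ℕ} (M : ℕ) (θ : Matrix (Fin n) (Fin n) ℝ) :
    perm' θ ^ M = ∑ K ∈ magicMatrices n M, typeCount M K * ∏ i, ∏ j, θ i j ^ K i j := by
  have h : ∀ s : Fin M → Equiv.Perm (Fin n), ∏ m, ∏ i, θ i (s m i) =
      ∏ i, ∏ j, θ i j ^ permType s i j := by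
    intro s
    rw [Finset.prod_comm]
    exact Finset.prod_congr rfl fun i _ => prod_comp_eq_prod_pow (θ i) fun m => s m i
  rw [perm', Fintype.sum_pow, ← Finset.sum_fiberwise_of_maps_to (g := permType)
    (t := magicMatrices n M) fun s _ => mem_magicMatrices.2 (isMagic_permType s)]
  refine Finset.sum_congr rfl fun K _ => ?_
  rw [Finset.sum_congr rfl fun s hs => by rw [h s, (Finset.mem_filter.1 hs).2], Finset.sum_const,
    nsmul_eq_mul, typeCount]

lemma avgLiftPerm_eq {n : ℕ} (M : ℕ) (θ : Matrix (Fin n) (Fin n) ℝ) :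
    avgLiftPerm n M θ =
      ∑ K ∈ magicMatrices n M, betheCount M K * ∏ i, ∏ j, θ i j ^ K i j := by
  rw [avgLiftPerm, sum_perm'_liftMat, ← Finset.sum_fiberwise_of_maps_to (g := blockType)
    (t := magicMatrices n M) fun τ _ => mem_magicMatrices.2 (isMagic_blockType τ), Finset.sum_div]
  refine Finset.sum_congr rfl fun K hK => ?_
  rw [Finset.sum_congr rfl fun τ hτ => by rw [(Finset.mem_filter.1 hτ).2], Finset.sum_const,
    nsmul_eq_mul]
  have hc := congrArg (Nat.cast : ℕ → ℝ) (card_blockType (mem_magicMatrices.1 hK))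
  push_cast at hc
  have hK0 : (∏ i, ∏ j, ((K i j).factorial : ℝ)) ≠ 0 := by positivity
  rw [← eq_div_iff hK0] at hc
  simp only [betheCount, betheFactor, Finset.prod_mul_distrib, Finset.prod_div_distrib, hc,
    Fintype.card_pi, Fintype.card_perm, Fintype.card_fin, Nat.cast_prod]
  field_simp

lemma avgLiftPerm_le {n : ℕ} (M : ℕ) {θ : Matrix (Fin n) (Fin n) ℝ} (hθ : ∀ i j, 0 ≤ θ i j) :
    avgLiftPerm n M θ ≤ perm' θ ^ M := by
  rw [avgLiftPerm_eq, perm'_pow_eq]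
  exact Finset.sum_le_sum fun K hK => mul_le_mul_of_nonneg_right
    (betheCount_le_typeCount M K (mem_magicMatrices.1 hK))
    (Finset.prod_nonneg fun i _ => Finset.prod_nonneg fun j _ => pow_nonneg (hθ i j) _)

lemma perm'_pow_succ_le {n : ℕ} (M : ℕ) {θ : Matrix (Fin n) (Fin n) ℝ} (hθ : ∀ i j, 0 ≤ θ i j) :
    perm' θ ^ (M + 1) ≤
      Real.exp (M * (n * (Real.log 2 / 2))) * avgLiftPerm n (M + 1) θ := by
  rw [avgLiftPerm_eq, perm'_pow_eq, Finset.mul_sum]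
  simp only [← mul_assoc]
  refine Finset.sum_le_sum fun K hK => mul_le_mul_of_nonneg_right ?_
    (Finset.prod_nonneg fun i _ => Finset.prod_nonneg fun j _ => pow_nonneg (hθ i j) _)
  have := typeCount_le M K (mem_magicMatrices.1 hK)
  simpa only [mul_assoc] using this

lemma perm'_pos {n : ℕ} {θ : Matrix (Fin n) (Fin n) ℝ} (hθ : ∀ i j, 0 ≤ θ i j)
    (hex : ∃ σ : Equiv.Perm (Fin n), 0 < ∏ i, θ i (σ i)) : 0 < perm' θ := by
  obtain ⟨σ, hσ⟩ := hex
  exact Finset.sum_pos' (fun τ _ => Finset.prod_nonneg fun i _ => hθ i (τ i))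
    ⟨σ, Finset.mem_univ σ, hσ⟩

/-- For `n, M ≥ 1` and a nonnegative `n×n` matrix `θ` with
`∏_i θ(i,σ(i)) > 0` for at least one permutation `σ`:
`⟨perm(θ↑P_M)⟩ ≤ perm(θ)^M ≤ 2^{n(M−1)/2} · ⟨perm(θ↑P_M)⟩`; equivalently, the degree-`M`
Bethe permanent `perm_{B,M}(θ) = ⟨perm(θ↑P_M)⟩^{1/M}` satisfies
`1 ≤ perm(θ)/perm_{B,M}(θ) ≤ (2^{n/2})^{(M−1)/M}`. -/
theorem statement_5 (n M : ℕ) (hn : 1 ≤ n) (hM : 1 ≤ M)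
    (θ : Matrix (Fin n) (Fin n) ℝ) (hθ : ∀ i j, 0 ≤ θ i j)
    (hex : ∃ σ : Equiv.Perm (Fin n), 0 < ∏ i, θ i (σ i)) :
    (avgLiftPerm n M θ ≤ perm' θ ^ M ∧
      perm' θ ^ M ≤ (2 : ℝ) ^ (((n : ℝ) * ((M : ℝ) - 1)) / 2) * avgLiftPerm n M θ) ∧
    (1 ≤ perm' θ / (avgLiftPerm n M θ) ^ (1 / (M : ℝ)) ∧
      perm' θ / (avgLiftPerm n M θ) ^ (1 / (M : ℝ)) ≤
        ((2 : ℝ) ^ ((n : ℝ) / 2)) ^ (((M : ℝ) - 1) / (M : ℝ))) := by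

  obtain ⟨N, rfl⟩ : ∃ N, M = N + 1 := ⟨M - 1, (Nat.sub_add_cancel hM).symm⟩
  have hlow := avgLiftPerm_le (N + 1) hθ
  have hexp : Real.exp (N * (n * (Real.log 2 / 2))) =
      (2 : ℝ) ^ (((n : ℝ) * (((N + 1 : ℕ) : ℝ) - 1)) / 2) := by
    rw [Real.rpow_def_of_pos two_pos]
    push_cast
    ring_nf
  have hupp := perm'_pow_succ_le N hθ
  rw [hexp] at hupp
  have hp := perm'_pos hθ hex
  have hM0 : ((N + 1 : ℕ) : ℝ) ≠ 0 := by positivity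
  have ha : 0 < avgLiftPerm n (N + 1) θ :=
    pos_of_mul_pos_right ((pow_pos hp _).trans_le hupp) (Real.rpow_nonneg two_pos.le _)
  have hroot : (perm' θ ^ (N + 1)) ^ (1 / ((N + 1 : ℕ) : ℝ)) = perm' θ := by
    rw [one_div]
    exact Real.pow_rpow_inv_natCast hp.le N.succ_ne_zero
  have hM1 : 0 ≤ 1 / ((N + 1 : ℕ) : ℝ) := by positivity
  refine ⟨⟨hlow, hupp⟩, ?_, ?_⟩
  · rw [one_le_div (Real.rpow_pos_of_pos ha _)]
    exact (Real.rpow_le_rpow ha.le hlow hM1).trans_eq hroot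
  · rw [div_le_iff₀ (Real.rpow_pos_of_pos ha _)]
    refine (hroot.symm.trans_le (Real.rpow_le_rpow (pow_pos hp _).le hupp hM1)).trans_eq ?_
    rw [Real.mul_rpow (Real.rpow_nonneg two_pos.le _) ha.le, ← Real.rpow_mul two_pos.le,
      ← Real.rpow_mul two_pos.le]
    congr 2
    ring
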